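/- arXiv:0803.4254 — 11 statements merged into one kernel-verified Lean document; each statement's English description precedes it below -/
import Mathlib

section
/- Let Z and Y be real Banach spaces with dim Y = 1, let L : Z → Y be a continuous linear surjection, and let C ⊆ Z be a closed convex subset. Then there exists a continuous map s : L(C) → C (with the subspace topologies) such that L(s(y)) = y for every y ∈ L(C). -/
/-!
Any segment in `C` carries an explicit affine section of a linear functional over the interval
between the values at its ends. When `L '' C` lies on a line it can be identified with a set of
reals, each of whose points has a relative neighbourhood that is contained in such an interval. As
the fibres of `L` in `C` are convex, a partition of unity averages these local sections into a
global one.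
-/

open Set Topology

theorem exists_mem_Iic_mem_nhdsWithin {α : Type*} [LinearOrder α] [TopologicalSpace α]
    [ClosedIciTopology α] {S : Set α} {a : α} (ha : a ∈ S) :
    ∃ c ∈ S, Iic c ∈ 𝓝[S] a := by
  by_cases h : ∃ c ∈ S, a < c
  · obtain ⟨c, hc, hac⟩ := h
    exact ⟨c, hc, mem_nhdsWithin_of_mem_nhds (Iic_mem_nhds hac)⟩
  · push Not at h
    exact ⟨a, ha, Filter.mem_of_superset self_mem_nhdsWithin h⟩

theorem exists_mem_exists_mem_Icc_mem_nhdsWithin {α : Type*} [LinearOrder α] [TopologicalSpace α]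
    [ClosedIicTopology α] [ClosedIciTopology α] {S : Set α} {a : α} (ha : a ∈ S) :
    ∃ b ∈ S, ∃ c ∈ S, Icc b c ∈ 𝓝[S] a := by
  obtain ⟨b, hb, hba⟩ := exists_mem_Iic_mem_nhdsWithin (α := αᵒᵈ) ha
  obtain ⟨c, hc, hac⟩ := exists_mem_Iic_mem_nhdsWithin ha
  exact ⟨b, hb, c, hc, Filter.inter_mem hba hac⟩

theorem exists_continuous_mem_segment_and_apply_eq {𝕜 Z : Type*} [Field 𝕜] [LinearOrder 𝕜]
    [IsStrictOrderedRing 𝕜] [TopologicalSpace 𝕜] [IsTopologicalRing 𝕜] [AddCommGroup Z]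
    [Module 𝕜 Z] [TopologicalSpace Z] [IsTopologicalAddGroup Z] [ContinuousSMul 𝕜 Z]
    (f : Z →ₗ[𝕜] 𝕜) (u w : Z) :
    ∃ g : 𝕜 → Z, Continuous g ∧ ∀ x ∈ Icc (f u) (f w), g x ∈ segment 𝕜 u w ∧ f (g x) = x := by
  -- If `f u = f w`, then division by zero makes this the constant map `u`, as it should be.
  refine ⟨fun x ↦ AffineMap.lineMap u w ((x - f u) / (f w - f u)), by fun_prop, ?_⟩
  rintro x ⟨hux, hxw⟩
  constructor
  · have hux' : 0 ≤ x - f u := sub_nonneg.2 hux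
    have hxw' : x - f u ≤ f w - f u := sub_le_sub_right hxw _
    have hnonneg : 0 ≤ f w - f u := hux'.trans hxw'
    exact lineMap_mem_segment 𝕜 u w ⟨div_nonneg hux' hnonneg, div_le_one_of_le₀ hxw' hnonneg⟩
  · have hzero : f w - f u = 0 → x - f u = 0 := fun h ↦ by linarith
    calc
      f (AffineMap.lineMap u w ((x - f u) / (f w - f u)))
          = (x - f u) / (f w - f u) * (f w - f u) + f u := by simp [AffineMap.lineMap_apply]
      _ = x := by rw [div_mul_cancel_of_imp hzero, sub_add_cancel]

theorem exists_continuousMap_mem_convex_and_apply_eq {Z : Type*} [AddCommGroup Z] [Module ℝ Z]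
    [TopologicalSpace Z] [IsTopologicalAddGroup Z] [ContinuousSMul ℝ Z] (f : Z →ₗ[ℝ] ℝ)
    {C : Set Z} (hC : Convex ℝ C) :
    ∃ g : C(f '' C, Z), ∀ x, g x ∈ C ∧ f (g x) = x := by
  refine exists_continuous_forall_mem_convex_of_local
    (t := fun x : f '' C ↦ C ∩ f ⁻¹' {(x : ℝ)})
    (fun x ↦ hC.inter ((convex_singleton _).linear_preimage f)) fun a ↦ ?_
  obtain ⟨_, ⟨u, hu, rfl⟩, _, ⟨w, hw, rfl⟩, hnhds⟩ :=
    exists_mem_exists_mem_Icc_mem_nhdsWithin a.2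
  obtain ⟨g, hg, hgf⟩ := exists_continuous_mem_segment_and_apply_eq f u w
  refine ⟨Subtype.val ⁻¹' Icc (f u) (f w), preimage_coe_mem_nhds_subtype.2 hnhds,
    fun x ↦ g x, (hg.comp continuous_subtype_val).continuousOn, fun x hx ↦ ?_⟩
  exact ⟨hC.segment_subset hu hw (hgf x hx).1, (hgf x hx).2⟩

theorem exists_linearMap_continuousOn_injOn_of_collinear {𝕜 Y : Type*}
    [NontriviallyNormedField 𝕜] [CompleteSpace 𝕜] [AddCommGroup Y] [Module 𝕜 Y]
    [TopologicalSpace Y] [IsTopologicalAddGroup Y] [ContinuousSMul 𝕜 Y] [T2Space Y]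
    {S : Set Y} (hS : Collinear 𝕜 S) :
    ∃ φ : Y →ₗ[𝕜] 𝕜, ContinuousOn φ S ∧ InjOn φ S := by
  obtain rfl | ⟨p, hp⟩ := S.eq_empty_or_nonempty
  · exact ⟨0, continuousOn_empty _, injOn_empty _⟩
  have := hS.finiteDimensional_vectorSpan
  obtain ⟨ψ, hψ⟩ : ∃ ψ : vectorSpan 𝕜 S →ₗ[𝕜] 𝕜, Function.Injective ψ :=
    finrank_le_iff_exists_linearMap.1 <| by
      simpa using collinear_iff_finrank_le_one.1 hS
  obtain ⟨φ, rfl⟩ := ψ.exists_extend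
  refine ⟨φ, ?_, fun x hx y hy hxy ↦ ?_⟩
  · rw [continuousOn_iff_continuous_domRestrict]
    let v : S → vectorSpan 𝕜 S := fun y ↦ ⟨y - p, vsub_mem_vectorSpan 𝕜 y.2 hp⟩
    have hv : Continuous v := (continuous_subtype_val.sub continuous_const).subtype_mk _
    have hφv : S.domRestrict φ = fun y ↦ (φ ∘ₗ (vectorSpan 𝕜 S).subtype) (v y) + φ p := by
      ext y
      simp [v]
    rw [hφv]
    exact ((LinearMap.continuous_of_finiteDimensional _).comp hv).add continuous_const
  · have hsub : (⟨x - y, vsub_mem_vectorSpan 𝕜 hx hy⟩ : vectorSpan 𝕜 S) = 0 :=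
      hψ (by simp [hxy])
    exact sub_eq_zero.1 (congrArg Subtype.val hsub)

theorem closed_convex_hereditary_invertible_of_rank_one_general {Z Y : Type*}
    [AddCommGroup Z] [Module ℝ Z] [TopologicalSpace Z] [IsTopologicalAddGroup Z]
    [ContinuousSMul ℝ Z] [AddCommGroup Y] [Module ℝ Y] [TopologicalSpace Y]
    [IsTopologicalAddGroup Y] [ContinuousSMul ℝ Y] [T2Space Y]
    (L : Z →ₗ[ℝ] Y) {C : Set Z} (hC : Convex ℝ C) (hLC : Collinear ℝ (L '' C)) :
    ∃ s : L '' C → C, Continuous s ∧ ∀ y : L '' C, L (s y) = y := by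
  obtain ⟨φ, hφ, hφinj⟩ := exists_linearMap_continuousOn_injOn_of_collinear hLC
  obtain ⟨g, hg⟩ := exists_continuousMap_mem_convex_and_apply_eq (φ ∘ₗ L) hC
  have hmaps : MapsTo φ (L '' C) ((φ ∘ₗ L) '' C) := by
    rintro _ ⟨z, hz, rfl⟩
    exact mem_image_of_mem _ hz
  let coord : L '' C → (φ ∘ₗ L) '' C := hmaps.restrict
  have hcoord : Continuous coord := hφ.mapsToRestrict hmaps
  refine ⟨fun y ↦ ⟨g (coord y), (hg _).1⟩, (g.continuous.comp hcoord).subtype_mk _, fun y ↦ ?_⟩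
  exact hφinj (mem_image_of_mem L (hg (coord y)).1) y.2 (hg (coord y)).2

/-- Theorem 2.1, (c) ⇒ (a): every continuous linear surjection `L` from a Banach space `Z`
onto a one-dimensional Banach space `Y` is hereditarily invertible with respect to the family
of all closed convex subsets of `Z`: for each closed convex `C ⊆ Z` the restriction
`L|_C : C → L(C)` admits a continuous right inverse. -/
theorem closed_convex_hereditary_invertible_of_rank_one
    {Z Y : Type*} [NormedAddCommGroup Z] [NormedSpace ℝ Z] [CompleteSpace Z]
    [NormedAddCommGroup Y] [NormedSpace ℝ Y] [CompleteSpace Y]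
    (hY : Module.rank ℝ Y = 1)
    (L : Z →L[ℝ] Y) (hL : Function.Surjective L)
    (C : Set Z) (hC : Convex ℝ C) (hCcl : IsClosed C) :
    ∃ s : ↥(⇑L '' C) → ↥C, Continuous s ∧ ∀ y : ↥(⇑L '' C), L (s y : Z) = (y : Y) :=
  closed_convex_hereditary_invertible_of_rank_one_general L.toLinearMap hC
    ((Submodule.rank_le _).trans hY.le)
end

section
/- Let Y be a real Banach space with dim Y ≥ 2. Then there exist a continuous linear surjection L : ℝ × Y → Y and a compact convex subset C ⊆ ℝ × Y such that no continuous map s : L(C) → C satisfies L(s(y)) = y for every y ∈ L(C). -/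
/-!
Join the lower half of the unit disc, placed at height `0`, to the upper half, placed at height `1`,
by all segments between them. The result is a compact convex body in `ℝ × ℂ` that projects onto
the disc. Since points of the unit circle are extreme in the disc, the fibre over a point of the
open lower (upper) semicircle is the single height `0` (`1`). Following a continuous section along
the circle therefore forces two different heights at the point `1`. A plane in `Y` carries a copy of
this body.
-/

open Set Metric Module

section Lift

variable {X Y Z : Type*} [TopologicalSpace X] [TopologicalSpace Y] [TopologicalSpace Z]

/-- The restriction of `f` to `C` has a continuous right inverse `f(C) → C`, both sets carrying the
subspace topology. -/
def HasContinuousRightInverseOn (f : X → Y) (C : Set X) : Prop :=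
  ∃ s : f '' C → C, Continuous s ∧ ∀ y : f '' C, f (s y) = y

lemma HasContinuousRightInverseOn.exists_continuous_lift {f : X → Y} {C : Set X}
    (h : HasContinuousRightInverseOn f C) {γ : Z → Y} (hγ : Continuous γ)
    (hγC : ∀ z, γ z ∈ f '' C) :
    ∃ γ' : Z → X, Continuous γ' ∧ ∀ z, γ' z ∈ C ∧ f (γ' z) = γ z := by
  obtain ⟨s, hs, hfs⟩ := h
  exact ⟨fun z ↦ s ⟨γ z, hγC z⟩, by fun_prop, fun z ↦ ⟨(s _).2, hfs _⟩⟩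

end Lift

section ConvexJoin

variable {𝕜 E F : Type*} [Ring 𝕜] [PartialOrder 𝕜] [AddRightMono 𝕜]
  [AddCommGroup E] [Module 𝕜 E] [AddCommGroup F] [Module 𝕜 F]

lemma isCompact_convexJoin [TopologicalSpace 𝕜] [ContinuousSub 𝕜] [CompactIccSpace 𝕜]
    [TopologicalSpace E] [ContinuousAdd E] [ContinuousSMul 𝕜 E] {S T : Set E}
    (hS : IsCompact S) (hT : IsCompact T) : IsCompact (convexJoin 𝕜 S T) := by
  have himage : convexJoin 𝕜 S T =
      (fun p : 𝕜 × E × E ↦ (1 - p.1) • p.2.1 + p.1 • p.2.2) '' (Icc 0 1 ×ˢ S ×ˢ T) := by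
    ext z
    simp only [mem_convexJoin, segment_eq_image, mem_image, mem_prod, Prod.exists]
    grind
  rw [himage]
  exact (isCompact_Icc.prod (hS.prod hT)).image (by fun_prop)

variable [ZeroLEOneClass 𝕜]

lemma right_mem_of_mem_convexJoin_of_map_mem_extremePoints {f : E →ᵃ[𝕜] F} {S T : Set E}
    {K : Set F} {z : E} (hS : MapsTo f S K) (hT : MapsTo f T K) (hz : z ∈ convexJoin 𝕜 S T)
    (hfz : f z ∈ K.extremePoints 𝕜) (hSz : ∀ x ∈ S, f x ≠ f z) : z ∈ T := by
  obtain ⟨x, hx, y, hy, hxyz⟩ := mem_convexJoin.1 hz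
  suffices y = z from this ▸ hy
  by_contra hyz
  have hxz : x ≠ z := fun h ↦ hSz x hx (congrArg f h)
  have hopen : f z ∈ openSegment 𝕜 (f x) (f y) :=
    image_openSegment 𝕜 f x y ▸
      mem_image_of_mem f (mem_openSegment_of_ne_left_right hxz hyz hxyz)
  exact hSz x hx (hfz.2 (hS hx) (hT hy) hopen)

lemma left_mem_of_mem_convexJoin_of_map_mem_extremePoints {f : E →ᵃ[𝕜] F} {S T : Set E}
    {K : Set F} {z : E} (hS : MapsTo f S K) (hT : MapsTo f T K) (hz : z ∈ convexJoin 𝕜 S T)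
    (hfz : f z ∈ K.extremePoints 𝕜) (hTz : ∀ y ∈ T, f y ≠ f z) : z ∈ S :=
  right_mem_of_mem_convexJoin_of_map_mem_extremePoints hT hS
    (convexJoin_comm (𝕜 := 𝕜) S T ▸ hz) hfz hTz

end ConvexJoin

lemma exists_injective_continuousLinearMap_of_finrank_le_rank {𝕜 E F : Type*}
    [NontriviallyNormedField 𝕜] [CompleteSpace 𝕜]
    [AddCommGroup E] [Module 𝕜 E] [TopologicalSpace E] [IsTopologicalAddGroup E]
    [ContinuousSMul 𝕜 E] [T2Space E] [FiniteDimensional 𝕜 E]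
    [AddCommGroup F] [Module 𝕜 F] [TopologicalSpace F] [IsTopologicalAddGroup F]
    [ContinuousSMul 𝕜 F] (h : (finrank 𝕜 E : Cardinal) ≤ Module.rank 𝕜 F) :
    ∃ j : E →L[𝕜] F, Function.Injective j := by
  obtain ⟨j, hj⟩ := (lift_rank_le_iff_exists_linearMap (R := 𝕜) (M := E) (M' := F)).1 <| by
    simpa only [← finrank_eq_rank 𝕜 E, Cardinal.lift_natCast, Cardinal.nat_le_lift_iff] using h
  exact ⟨LinearMap.toContinuousLinearMap j, hj⟩

section HalfDiscs

/-- The closed upper half of the unit disc. -/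
def upperHalfDisc : Set ℂ := closedBall 0 1 ∩ {w | 0 ≤ w.im}

/-- The closed lower half of the unit disc. -/
def lowerHalfDisc : Set ℂ := closedBall 0 1 ∩ {w | w.im ≤ 0}

/-- The union of all segments between the lower half-disc at height `0` and the upper half-disc at
height `1`; the height is the first coordinate. -/
def halfDiscJoin : Set (ℝ × ℂ) := convexJoin ℝ ({0} ×ˢ lowerHalfDisc) ({1} ×ˢ upperHalfDisc)

lemma isCompact_halfDiscJoin : IsCompact halfDiscJoin :=
  isCompact_convexJoin
    (isCompact_singleton.prod <| (isCompact_closedBall 0 1).inter_right <|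
      isClosed_le Complex.continuous_im continuous_const)
    (isCompact_singleton.prod <| (isCompact_closedBall 0 1).inter_right <|
      isClosed_le continuous_const Complex.continuous_im)

lemma convex_halfDiscJoin : Convex ℝ halfDiscJoin :=
  Convex.convexJoin
    ((convex_singleton 0).prod <| (convex_closedBall 0 1).inter <| convex_halfSpace_im_le 0)
    ((convex_singleton 1).prod <| (convex_closedBall 0 1).inter <| convex_halfSpace_im_ge 0)

lemma closedBall_subset_snd_image_halfDiscJoin : closedBall 0 1 ⊆ Prod.snd '' halfDiscJoin := by
  intro w hw
  have hlower : ((0 : ℝ), (0 : ℂ)) ∈ ({0} : Set ℝ) ×ˢ lowerHalfDisc := by simp [lowerHalfDisc]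
  have hupper : ((1 : ℝ), (0 : ℂ)) ∈ ({1} : Set ℝ) ×ˢ upperHalfDisc := by simp [upperHalfDisc]
  rcases le_total w.im 0 with him | him
  · exact ⟨(0, w), subset_convexJoin_left ⟨_, hupper⟩ ⟨rfl, hw, him⟩, rfl⟩
  · exact ⟨(1, w), subset_convexJoin_right ⟨_, hlower⟩ ⟨rfl, hw, him⟩, rfl⟩

lemma eq_zero_of_mem_halfDiscJoin {t : ℝ} {w : ℂ} (h : (t, w) ∈ halfDiscJoin)
    (hw : w ∈ sphere 0 1) (him : w.im < 0) : t = 0 :=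
  (left_mem_of_mem_convexJoin_of_map_mem_extremePoints
    (f := (LinearMap.snd ℝ ℝ ℂ).toAffineMap) (K := closedBall 0 1)
    (fun _ hx ↦ hx.2.1) (fun _ hy ↦ hy.2.1) h
    (StrictConvexSpace.sphere_subset_extremePoints_closedBall 0 one_ne_zero hw)
    fun y hy (hyw : y.2 = w) ↦ him.not_ge (hyw ▸ hy.2.2)).1

lemma eq_one_of_mem_halfDiscJoin {t : ℝ} {w : ℂ} (h : (t, w) ∈ halfDiscJoin)
    (hw : w ∈ sphere 0 1) (him : 0 < w.im) : t = 1 :=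
  (right_mem_of_mem_convexJoin_of_map_mem_extremePoints
    (f := (LinearMap.snd ℝ ℝ ℂ).toAffineMap) (K := closedBall 0 1)
    (fun _ hx ↦ hx.2.1) (fun _ hy ↦ hy.2.1) h
    (StrictConvexSpace.sphere_subset_extremePoints_closedBall 0 one_ne_zero hw)
    fun x hx (hxw : x.2 = w) ↦ him.not_ge (hxw ▸ hx.2.2)).1

lemma not_forall_mem_halfDiscJoin_of_continuous {g : ℝ → ℝ} (hg : Continuous g) :
    ¬ ∀ θ, (g θ, circleMap 0 1 θ) ∈ halfDiscJoin := by
  intro hmem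
  have hsphere (θ : ℝ) : circleMap 0 1 θ ∈ sphere 0 1 := circleMap_mem_sphere 0 zero_le_one θ
  have hlower : EqOn g (fun _ ↦ 0) (Ioo (-Real.pi) 0) := fun θ hθ ↦
    eq_zero_of_mem_halfDiscJoin (hmem θ) (hsphere θ) <| by
      simpa [circleMap_zero_im] using Real.sin_neg_of_neg_of_neg_pi_lt hθ.2 hθ.1
  have hupper : EqOn g (fun _ ↦ 1) (Ioo 0 Real.pi) := fun θ hθ ↦
    eq_one_of_mem_halfDiscJoin (hmem θ) (hsphere θ) <| by
      simpa [circleMap_zero_im] using Real.sin_pos_of_mem_Ioo hθ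
  have hzero : g 0 = 0 := hlower.closure hg continuous_const <| by
    simp [closure_Ioo, Real.pi_pos.ne', Real.pi_nonneg]
  have hone : g 0 = 1 := hupper.closure hg continuous_const <| by
    simp [closure_Ioo, Real.pi_pos.ne, Real.pi_nonneg]
  exact zero_ne_one (hzero.symm.trans hone)

end HalfDiscs

theorem exists_no_continuous_right_inverse_of_two_le_rank_general
    {Y : Type*} [AddCommGroup Y] [Module ℝ Y] [TopologicalSpace Y] [IsTopologicalAddGroup Y]
    [ContinuousSMul ℝ Y] (hY : 2 ≤ Module.rank ℝ Y) :
    ∃ (L : ℝ × Y →L[ℝ] Y) (C : Set (ℝ × Y)), Function.Surjective L ∧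
      IsCompact C ∧ Convex ℝ C ∧ ¬ HasContinuousRightInverseOn L C := by
  obtain ⟨j, hj⟩ : ∃ j : ℂ →L[ℝ] Y, Function.Injective j :=
    exists_injective_continuousLinearMap_of_finrank_le_rank <| by
      simpa [Complex.finrank_real_complex] using hY
  let J : ℝ × ℂ →L[ℝ] ℝ × Y := (ContinuousLinearMap.id ℝ ℝ).prodMap j
  have hJ : Function.Injective J := Function.injective_id.prodMap hj
  refine ⟨ContinuousLinearMap.snd ℝ ℝ Y, J '' halfDiscJoin, Prod.snd_surjective,
    isCompact_halfDiscJoin.image J.continuous, convex_halfDiscJoin.linear_image J.toLinearMap,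
    fun hinv ↦ ?_⟩
  have hcircle (θ : ℝ) :
      j (circleMap 0 1 θ) ∈ ContinuousLinearMap.snd ℝ ℝ Y '' (J '' halfDiscJoin) := by
    obtain ⟨z, hz, hzθ⟩ :=
      closedBall_subset_snd_image_halfDiscJoin (circleMap_mem_closedBall 0 zero_le_one θ)
    exact ⟨J z, mem_image_of_mem J hz, congrArg j hzθ⟩
  obtain ⟨γ, hγ, hγθ⟩ :=
    hinv.exists_continuous_lift (j.continuous.comp (continuous_circleMap 0 1)) hcircle
  refine not_forall_mem_halfDiscJoin_of_continuous hγ.fst fun θ ↦ hJ.mem_set_image.1 ?_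
  have hγJ : γ θ = J ((γ θ).1, circleMap 0 1 θ) := Prod.ext rfl (hγθ θ).2
  exact hγJ ▸ (hγθ θ).1

/-- Theorem 2.1, ¬(c) ⇒ ¬(b): if `Y` is a Banach space with `dim Y ≥ 2`, then there exist a
continuous linear surjection `L : ℝ × Y → Y` and a compact convex subset `C ⊆ ℝ × Y` such that
the restriction `L|_C : C → L(C)` admits no continuous right inverse. -/
theorem exists_no_continuous_right_inverse_of_two_le_rank
    {Y : Type*} [NormedAddCommGroup Y] [NormedSpace ℝ Y] [CompleteSpace Y]
    (hY : 2 ≤ Module.rank ℝ Y) :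
    ∃ (L : ℝ × Y →L[ℝ] Y) (C : Set (ℝ × Y)), Function.Surjective L ∧
      IsCompact C ∧ Convex ℝ C ∧
      ¬ ∃ s : ↥(⇑L '' C) → ↥C, Continuous s ∧ ∀ y : ↥(⇑L '' C), L (s y : ℝ × Y) = (y : Y) := by
  exact exists_no_continuous_right_inverse_of_two_le_rank_general hY
end

section
/- Let K = {(cos t, sin t, t) : t ∈ [0, 2π]} ⊂ ℝ³ be one full rotation of a spiral, let C be the convex hull of K (a compact convex set), and let P : ℝ³ → ℝ² be the orthogonal projection P(x, y, z) = (x, y). Then the restriction P|_C : C → P(C) (with the subspace topologies) is not an open map. -/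
open Real

/-- One full rotation of the spiral `{(cos t, sin t, t) : 0 ≤ t ≤ 2π}` in `ℝ³`. -/
noncomputable def spiralK : Set (ℝ × ℝ × ℝ) :=
  (fun t : ℝ => (Real.cos t, Real.sin t, t)) '' Set.Icc 0 (2 * Real.pi)

/-- The convex hull of one full rotation of the spiral. -/
noncomputable def spiralC : Set (ℝ × ℝ × ℝ) := convexHull ℝ spiralK

/-- The orthogonal projection `P : ℝ³ → ℝ²`, `P (x, y, z) = (x, y)`. -/
noncomputable def projP : (ℝ × ℝ × ℝ) →L[ℝ] ℝ × ℝ :=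
  (ContinuousLinearMap.fst ℝ ℝ (ℝ × ℝ)).prod
    ((ContinuousLinearMap.fst ℝ ℝ ℝ).comp (ContinuousLinearMap.snd ℝ ℝ (ℝ × ℝ)))

/-!
A point of `C` above the circle point `(cos s, sin s)` maximises the linear functional
`(x, y, z) ↦ x cos s + y sin s` over `C`. For `0 < s < 2π` its only maximiser on the spiral is the
point of parameter `s`, so the fibre of `P|_C` above `(cos s, sin s)` is a single point. As `s → 2π`
these points converge to `(1, 0, 2π)`, whereas openness of `P|_C` at `(1, 0, 0)`, which has the same
image as `(1, 0, 2π)`, would force them to accumulate at `(1, 0, 0)`.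
-/

section OpenMap

open Filter Topology

theorem eq_of_mem_closure_singleton_fibers {X Y : Type*} [TopologicalSpace X] [T2Space X]
    [TopologicalSpace Y] {f : X → Y} {x y : X} (hopen : 𝓝 (f x) ≤ map f (𝓝 x))
    (hcont : ContinuousAt f y) (hxy : f x = f y)
    (hy : y ∈ closure {z | ∀ w, f w = f z → w = z}) : x = y := by
  by_contra hne
  obtain ⟨U, V, hU, hV, hUV⟩ := t2_separation_nhds hne
  have hfU : f ⁻¹' (f '' U) ∈ 𝓝 y := hcont (hxy ▸ hopen (image_mem_map hU))
  obtain ⟨z, ⟨hzV, w, hwU, hwz⟩, hz⟩ := mem_closure_iff_nhds.1 hy _ (inter_mem hV hfU)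
  exact hUV.ne_of_mem hwU hzV (hz w hwz)

end OpenMap

section ConvexHull

variable {𝕜 E β : Type*} [Semiring 𝕜] [PartialOrder 𝕜] [AddCommMonoid E] [Module 𝕜 E]
  [AddCommMonoid β] [PartialOrder β] [IsOrderedCancelAddMonoid β] [Module 𝕜 β]
  [PosSMulStrictMono 𝕜 β] {f : E → β} {c : β} {s t : Set E}

theorem openSegment_subset_lt_of_convexOn (hf : ConvexOn 𝕜 t f) {x y : E}
    (hx : x ∈ {z ∈ t | f z < c}) (hy : y ∈ {z ∈ t | f z ≤ c}) :
    openSegment 𝕜 x y ⊆ {z ∈ t | f z < c} := by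
  rintro _ ⟨a, b, ha, hb, hab, rfl⟩
  have hmem := hf.openSegment_subset_strict_epigraph (x, c) (y, c) hx hy ⟨a, b, ha, hb, hab, rfl⟩
  simpa only [Set.mem_ofPred_eq, Prod.smul_mk, Prod.mk_add_mk, Convex.combo_self hab] using hmem

variable [ZeroLEOneClass 𝕜]

theorem convex_lt_union_of_convexOn (hf : ConvexOn 𝕜 t f) (hs : Convex 𝕜 s)
    (hst : s ⊆ {x ∈ t | f x ≤ c}) : Convex 𝕜 ({x ∈ t | f x < c} ∪ s) := by
  refine convex_iff_openSegment_subset.2 ?_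
  rintro x (hx | hx) y (hy | hy)
  · exact (openSegment_subset_lt_of_convexOn hf hx ⟨hy.1, hy.2.le⟩).trans Set.subset_union_left
  · exact (openSegment_subset_lt_of_convexOn hf hx (hst hy)).trans Set.subset_union_left
  · rw [openSegment_symm]
    exact (openSegment_subset_lt_of_convexOn hf hy (hst hx)).trans Set.subset_union_left
  · exact (hs.openSegment_subset hx hy).trans Set.subset_union_right

theorem mem_convexHull_inter_eq_of_convexOn (hf : ConvexOn 𝕜 t f)
    (hst : s ⊆ {x ∈ t | f x ≤ c}) {x : E} (hx : x ∈ convexHull 𝕜 s) (hxc : f x = c) :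
    x ∈ convexHull 𝕜 (s ∩ {y | f y = c}) := by
  have hface : convexHull 𝕜 (s ∩ {y | f y = c}) ⊆ {y ∈ t | f y ≤ c} :=
    convexHull_min (Set.inter_subset_left.trans hst) (hf.convex_le c)
  have hsub : s ⊆ {y ∈ t | f y < c} ∪ convexHull 𝕜 (s ∩ {y | f y = c}) := by
    intro y hy
    rcases (hst hy).2.lt_or_eq with hlt | heq
    · exact .inl ⟨(hst hy).1, hlt⟩
    · exact .inr (subset_convexHull 𝕜 _ ⟨hy, heq⟩)
  rcases convexHull_min hsub (convex_lt_union_of_convexOn hf (convex_convexHull 𝕜 _) hface) hx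
    with hlt | hmem
  · exact absurd hxc hlt.2.ne
  · exact hmem

end ConvexHull

section Spiral

/-- The linear functional `(x, y, z) ↦ x cos s + y sin s`, whose maximum over the solid cylinder
above the unit disk is attained exactly on the vertical line above `(cos s, sin s)`. -/
noncomputable def angularFunctional (s : ℝ) : (ℝ × ℝ × ℝ) →ₗ[ℝ] ℝ :=
  Real.cos s • LinearMap.fst ℝ ℝ (ℝ × ℝ) +
    Real.sin s • LinearMap.fst ℝ ℝ ℝ ∘ₗ LinearMap.snd ℝ ℝ (ℝ × ℝ)

theorem angularFunctional_cos_sin (s t z : ℝ) :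
    angularFunctional s (Real.cos t, Real.sin t, z) = Real.cos (t - s) := by
  simp only [angularFunctional, LinearMap.add_apply, LinearMap.smul_apply, LinearMap.comp_apply,
    LinearMap.fst_apply, LinearMap.snd_apply, smul_eq_mul, Real.cos_sub]
  ring

theorem angularFunctional_le_one_of_mem_spiralK (s : ℝ) {p : ℝ × ℝ × ℝ} (hp : p ∈ spiralK) :
    angularFunctional s p ≤ 1 := by
  obtain ⟨t, -, rfl⟩ := hp
  exact (angularFunctional_cos_sin s t t).trans_le (Real.cos_le_one _)

theorem spiralK_inter_angularFunctional_eq_one_subset {s : ℝ} (hs : s ∈ Set.Ioo 0 (2 * π)) :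
    spiralK ∩ {p | angularFunctional s p = 1} ⊆ {(Real.cos s, Real.sin s, s)} := by
  rintro _ ⟨⟨t, ht, rfl⟩, hmax⟩
  have hcos : Real.cos (t - s) = 1 := (angularFunctional_cos_sin s t t).symm.trans hmax
  have hts : t - s = 0 := (Real.cos_eq_one_iff_of_lt_of_lt (by linarith [ht.1, hs.2])
    (by linarith [ht.2, hs.1])).1 hcos
  rw [sub_eq_zero.1 hts, Set.mem_singleton_iff]

theorem eq_of_mem_spiralC_of_projP_eq {s : ℝ} (hs : s ∈ Set.Ioo 0 (2 * π)) {p : ℝ × ℝ × ℝ}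
    (hp : p ∈ spiralC) (hproj : projP p = (Real.cos s, Real.sin s)) :
    p = (Real.cos s, Real.sin s, s) := by
  have hmax : angularFunctional s p = 1 := by
    obtain ⟨x, y, z⟩ := p
    obtain ⟨rfl, rfl⟩ := Prod.mk.inj hproj
    rw [angularFunctional_cos_sin, sub_self, Real.cos_zero]
  have hface : p ∈ convexHull ℝ (spiralK ∩ {q | angularFunctional s q = 1}) :=
    mem_convexHull_inter_eq_of_convexOn ((angularFunctional s).convexOn convex_univ)
      (fun _ hq ↦ ⟨Set.mem_univ _, angularFunctional_le_one_of_mem_spiralK s hq⟩) hp hmax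
  simpa only [convexHull_singleton, Set.mem_singleton_iff] using
    convexHull_mono (spiralK_inter_angularFunctional_eq_one_subset hs) hface

/-- The parametrisation of the spiral, as a map into its convex hull. -/
noncomputable def spiralPoint (t : Set.Icc 0 (2 * π)) : spiralC :=
  ⟨(Real.cos t, Real.sin t, t), subset_convexHull ℝ _ ⟨t, t.2, rfl⟩⟩

theorem continuous_spiralPoint : Continuous spiralPoint := by
  unfold spiralPoint
  fun_prop

end Spiral

/-- Lemma 2.2, first assertion: the restriction `P|_C : C → P(C)` of the orthogonal projection
`P(x,y,z) = (x,y)` to the convex hull `C` of one full rotation of the spiral is not an open map. -/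
theorem spiral_restriction_not_isOpenMap :
    ¬ IsOpenMap (fun x : ↥spiralC =>
      (⟨projP (x : ℝ × ℝ × ℝ), ⟨(x : ℝ × ℝ × ℝ), x.2, rfl⟩⟩ : ↥(⇑projP '' spiralC))) := by
  intro hopen
  set f : spiralC → projP '' spiralC := fun x ↦ ⟨projP x, x, x.2, rfl⟩
  have hπ : (0 : ℝ) ≤ 2 * π := Real.two_pi_pos.le
  let start : Set.Icc 0 (2 * π) := ⟨0, Set.left_mem_Icc.2 hπ⟩
  let finish : Set.Icc 0 (2 * π) := ⟨2 * π, Set.right_mem_Icc.2 hπ⟩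
  have hlt : start < finish := Real.two_pi_pos
  have hcont : Continuous f := (projP.continuous.comp continuous_subtype_val).subtype_mk _
  have hends : f (spiralPoint start) = f (spiralPoint finish) :=
    Subtype.ext (Prod.ext (Real.cos_zero.trans Real.cos_two_pi.symm)
      (Real.sin_zero.trans Real.sin_two_pi.symm))
  have hfiber : Set.MapsTo spiralPoint (Set.Ioo start finish) {z | ∀ w, f w = f z → w = z} :=
    fun _ ht w hw ↦ Subtype.ext (eq_of_mem_spiralC_of_projP_eq ht w.2 (congrArg Subtype.val hw))
  have hfinish : finish ∈ closure (Set.Ioo start finish) := by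
    rw [closure_Ioo hlt.ne]
    exact Set.right_mem_Icc.2 hlt.le
  have heq : spiralPoint start = spiralPoint finish :=
    eq_of_mem_closure_singleton_fibers (hopen.nhds_le _) hcont.continuousAt hends
      (map_mem_closure continuous_spiralPoint hfinish hfiber)
  exact hlt.ne (Subtype.ext (congrArg (fun p : spiralC ↦ p.1.2.2) heq))
end

section
/- Let K = {(cos t, sin t, t) : t ∈ [0, 2π]} ⊂ ℝ³, let C be the convex hull of K, and let P : ℝ³ → ℝ² be the orthogonal projection P(x, y, z) = (x, y). Then there is no map s : P(C) → C satisfying P(s(y)) = y for all y ∈ P(C) that is continuous at the point (1, 0); in particular, the multivalued inverse (P|_C)⁻¹ : P(C) → C admits no continuous selection. -/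
open Real

/-!
For `0 < θ < 2π` the functional `(x, y, z) ↦ x cos θ + y sin θ` on `K` has its maximum `1` only at
parameter `θ`, so `(cos θ, sin θ, θ)` is the only point of `C` over `(cos θ, sin θ)`. A selection
continuous at `(1, 0)` would thus have both limits `θ → 0⁺` and `θ → 2π⁻` as its value there,
giving the heights `0` and `2π`.
-/

theorem mem_convexHull_sep_eq_of_convexOn {𝕜 E : Type*} [Field 𝕜] [LinearOrder 𝕜]
    [IsStrictOrderedRing 𝕜] [AddCommGroup E] [Module 𝕜 E] {s : Set E} {f : E → 𝕜} {c : 𝕜}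
    (hf : ConvexOn 𝕜 (convexHull 𝕜 s) f) (hfc : ∀ x ∈ s, f x ≤ c) {p : E}
    (hp : p ∈ convexHull 𝕜 s) (hpc : f p = c) : p ∈ convexHull 𝕜 {x ∈ s | f x = c} := by
  have f_le : ∀ x ∈ convexHull 𝕜 s, f x ≤ c := fun x hx ↦
    let ⟨y, hy, hxy⟩ := hf.exists_ge_of_mem_convexHull (subset_convexHull 𝕜 s) hx
    hxy.trans (hfc y hy)
  let T : Set E := {x ∈ convexHull 𝕜 s | f x = c → x ∈ convexHull 𝕜 {x ∈ s | f x = c}}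
  have convex_T : Convex 𝕜 T := by
    refine convex_iff_forall_pos.2 fun x hx y hy a b ha hb hab ↦
      ⟨convex_convexHull 𝕜 s hx.1 hy.1 ha.le hb.le hab, fun h ↦ ?_⟩
    have hle : c ≤ a * f x + b * f y := h.ge.trans (hf.2 hx.1 hy.1 ha.le hb.le hab)
    have hc : a * c + b * c = c := by rw [← add_mul, hab, one_mul]
    have hax : a * f x ≤ a * c := mul_le_mul_of_nonneg_left (f_le x hx.1) ha.le
    have hby : b * f y ≤ b * c := mul_le_mul_of_nonneg_left (f_le y hy.1) hb.le
    have hfx : f x = c := mul_left_cancel₀ ha.ne' (by linarith)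
    have hfy : f y = c := mul_left_cancel₀ hb.ne' (by linarith)
    exact convex_convexHull 𝕜 _ (hx.2 hfx) (hy.2 hfy) ha.le hb.le hab
  have subset_T : s ⊆ T := fun x hx ↦
    ⟨subset_convexHull 𝕜 s hx, fun h ↦ subset_convexHull 𝕜 _ ⟨hx, h⟩⟩
  exact (convexHull_min subset_T convex_T hp).2 hpc

theorem range_cos_sin_subset_image_spiralC :
    Set.range (fun θ : ℝ ↦ (cos θ, sin θ)) ⊆ projP '' spiralC := by
  have hper : Function.Periodic (fun θ : ℝ ↦ (cos θ, sin θ)) (2 * π) := fun θ ↦ by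
    simp only [cos_add_two_pi, sin_add_two_pi]
  rintro _ ⟨θ, rfl⟩
  obtain ⟨t, ht, hθt⟩ := hper.exists_mem_Ico₀ two_pi_pos θ
  exact ⟨(cos t, sin t, t),
    subset_convexHull ℝ _ ⟨t, Set.Ico_subset_Icc_self ht, rfl⟩, hθt.symm⟩

theorem eq_of_mem_spiralC_of_projP_eq_s4 {θ : ℝ} (hθ : θ ∈ Set.Ioo 0 (2 * π)) {p : ℝ × ℝ × ℝ}
    (hp : p ∈ spiralC) (hpθ : projP p = (cos θ, sin θ)) : p = (cos θ, sin θ, θ) := by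
  let ℓ : ℝ × ℝ →ₗ[ℝ] ℝ := cos θ • LinearMap.fst ℝ ℝ ℝ + sin θ • LinearMap.snd ℝ ℝ ℝ
  have ℓ_spiral (t : ℝ) : ℓ (cos t, sin t) = cos (θ - t) := (cos_sub θ t).symm
  have face_subset : {q ∈ spiralK | ℓ (projP q) = 1} ⊆ {(cos θ, sin θ, θ)} := by
    rintro _ ⟨⟨t, ⟨ht0, ht2⟩, rfl⟩, ht⟩
    have hcos : cos (θ - t) = 1 := (ℓ_spiral t).symm.trans ht
    have hsub : θ - t = 0 :=
      (cos_eq_one_iff_of_lt_of_lt (by linarith [hθ.1]) (by linarith [hθ.2])).1 hcos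
    rw [Set.mem_singleton_iff, sub_eq_zero.1 hsub]
  have hp_face : p ∈ convexHull ℝ {q ∈ spiralK | ℓ (projP q) = 1} := by
    refine mem_convexHull_sep_eq_of_convexOn
      ((ℓ ∘ₗ projP.toLinearMap).convexOn (convex_convexHull ℝ _)) ?_ hp ?_
    · rintro _ ⟨t, -, rfl⟩
      exact (ℓ_spiral t).trans_le (cos_le_one _)
    · calc ℓ (projP p) = cos (θ - θ) := by rw [hpθ, ℓ_spiral]
        _ = 1 := by rw [sub_self, cos_zero]
  exact convexHull_min face_subset (convex_singleton _) hp_face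

theorem lift_cos_sin_eq_of_continuousWithinAt {g : ℝ → ℝ × ℝ × ℝ}
    (hgC : ∀ t ∈ Set.Ioo 0 (2 * π), g t ∈ spiralC)
    (hgP : ∀ t ∈ Set.Ioo 0 (2 * π), projP (g t) = (cos t, sin t))
    {θ : ℝ} (hθ : θ ∈ Set.Icc 0 (2 * π)) (hg : ContinuousWithinAt g (Set.Ioo 0 (2 * π)) θ) :
    g θ = (cos θ, sin θ, θ) := by
  have hspiral : Continuous fun t : ℝ ↦ (cos t, sin t, t) := by fun_prop
  have hg_eq : Set.EqOn g (fun t ↦ (cos t, sin t, t)) (Set.Ioo 0 (2 * π)) := fun t ht ↦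
    eq_of_mem_spiralC_of_projP_eq_s4 ht (hgC t ht) (hgP t ht)
  have : (nhdsWithin θ (Set.Ioo 0 (2 * π))).NeBot := by
    rwa [← mem_closure_iff_nhdsWithin_neBot, closure_Ioo two_pi_pos.ne]
  exact tendsto_nhds_unique_of_eventuallyEq hg hspiral.continuousWithinAt
    hg_eq.eventuallyEq_nhdsWithin

theorem spiral_no_selection_continuousAt_general {T : Set (ℝ × ℝ)}
    (hT : Set.range (fun θ : ℝ ↦ (cos θ, sin θ)) ⊆ T) (h1 : (1, 0) ∈ T)
    (s : T → spiralC) (hs : ∀ y : T, projP (s y) = y) :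
    ¬ ContinuousAt s ⟨(1, 0), h1⟩ := by
  intro hc
  let γ : ℝ → T := fun θ ↦ ⟨(cos θ, sin θ), hT ⟨θ, rfl⟩⟩
  have hγ : Continuous γ := by fun_prop
  have lift_eq : ∀ θ ∈ Set.Icc 0 (2 * π), γ θ = ⟨(1, 0), h1⟩ →
      (s ⟨(1, 0), h1⟩ : ℝ × ℝ × ℝ) = (cos θ, sin θ, θ) := fun θ hθ hγθ ↦ by
    have hg : ContinuousAt (fun t ↦ (s (γ t) : ℝ × ℝ × ℝ)) θ :=
      (continuous_subtype_val.continuousAt.comp (hγθ ▸ hc)).comp hγ.continuousAt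
    rw [← hγθ]
    exact lift_cos_sin_eq_of_continuousWithinAt (fun t _ ↦ (s (γ t)).2)
      (fun t _ ↦ hs (γ t)) hθ hg.continuousWithinAt
  have at_zero := lift_eq 0 (Set.left_mem_Icc.2 two_pi_pos.le) (by simp [γ])
  have at_two_pi := lift_eq (2 * π) (Set.right_mem_Icc.2 two_pi_pos.le) (by simp [γ])
  have heights_eq : 0 = 2 * π := congrArg (fun q ↦ q.2.2) (at_zero.symm.trans at_two_pi)
  exact two_pi_pos.ne heights_eq

/-- Lemma 2.2, second (sharpened) assertion: no selection `s` of the multivalued inverse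
`(P|_C)⁻¹ : P(C) → C` is continuous at the point `(1, 0)`; in particular `(P|_C)⁻¹` admits
no continuous selection. -/
theorem spiral_no_selection_continuousAt
    (h1 : ((1, 0) : ℝ × ℝ) ∈ ⇑projP '' spiralC)
    (s : ↥(⇑projP '' spiralC) → ↥spiralC)
    (hs : ∀ y : ↥(⇑projP '' spiralC), projP (s y : ℝ × ℝ × ℝ) = (y : ℝ × ℝ)) :
    ¬ ContinuousAt s ⟨(1, 0), h1⟩ := by
  exact spiral_no_selection_continuousAt_general range_cos_sin_subset_image_spiralC h1 s hs
end

section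
/- Let C ⊂ ℝ³ be the convex hull of the set {(cos t, sin t, 0) : t ∈ [0, 2π]} ∪ {(1, 0, 1)}, and let p : ℝ³ → ℝ² be the orthogonal projection p(x, y, z) = (x, y). Then the restriction p|_C : C → p(C) is not an open map, yet the map s : p(C) → C defined by s(x, y) = (x, y, 0) is continuous and satisfies p(s(u)) = u for every u ∈ p(C). -/
open Real

/-- The convex hull of the unit circle in the plane `z = 0` together with the point `(1,0,1)`. -/
noncomputable def coneC : Set (ℝ × ℝ × ℝ) :=
  convexHull ℝ
    (((fun t : ℝ => (Real.cos t, Real.sin t, (0 : ℝ))) '' Set.Icc 0 (2 * Real.pi)) ∪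
      {((1 : ℝ), (0 : ℝ), (1 : ℝ))})

/-!
If the convex set `convexHull (insert w A)` is projected linearly by `f`, a point lying over an
extreme point `e ≠ f w` of the image cannot use `w` in its convex combination, hence lies in
`convexHull A`. Were `f` open onto the image and were such points `e` to accumulate at `f w`, then
`w` would be a limit of points lying over them, that is, of points of `convexHull A`. For the cone,
the extreme points are those of the unit circle and `convexHull A` is the base disk, which does not
contain the apex `w` in its closure.
-/

open Set

section LinearSection

variable {𝕜 V E : Type*} [Semiring 𝕜] [PartialOrder 𝕜]
  [AddCommMonoid V] [Module 𝕜 V] [AddCommMonoid E] [Module 𝕜 E] {w : V} {B : Set E}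

theorem image_convexHull_insert_image {f : V →ₗ[𝕜] E} {s : E →ₗ[𝕜] V}
    (hfs : Function.LeftInverse f s) (hw : f w ∈ B) :
    f '' convexHull 𝕜 (insert w (s '' B)) = convexHull 𝕜 B := by
  rw [f.image_convexHull, image_insert_eq, hfs.image_image, insert_eq_of_mem hw]

theorem map_mem_convexHull_insert_image (s : E →ₗ[𝕜] V) {u : E}
    (hu : u ∈ convexHull 𝕜 B) : s u ∈ convexHull 𝕜 (insert w (s '' B)) := by
  have hsu : s u ∈ convexHull 𝕜 (s '' B) := s.image_convexHull B ▸ mem_image_of_mem s hu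
  exact convexHull_mono (subset_insert w _) hsu

end LinearSection

section ConvexHullInsert

variable {𝕜 V E : Type*} [Field 𝕜] [LinearOrder 𝕜] [IsStrictOrderedRing 𝕜]
  [AddCommGroup V] [Module 𝕜 V] [AddCommGroup E] [Module 𝕜 E]
  {A : Set V} {w x : V}

theorem mem_convexHull_of_map_mem_extremePoints (f : V →ₗ[𝕜] E)
    (hx : x ∈ convexHull 𝕜 (insert w A))
    (hext : f x ∈ (f '' convexHull 𝕜 (insert w A)).extremePoints 𝕜) (hne : f x ≠ f w) :
    x ∈ convexHull 𝕜 A := by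
  have hxw : x ≠ w := fun h => hne (congrArg f h)
  obtain rfl | hA := A.eq_empty_or_nonempty
  · exact absurd (by simpa using hx) hxw
  rw [convexHull_insert hA, convexJoin_singleton_left, mem_iUnion₂] at hx
  obtain ⟨y, hy, hxy⟩ := hx
  rw [← insert_endpoints_openSegment] at hxy
  obtain rfl | rfl | hxy := hxy
  · exact absurd rfl hxw
  · exact hy
  · have hw : w ∈ convexHull 𝕜 (insert w A) := subset_convexHull 𝕜 _ (mem_insert w A)
    have hy' : y ∈ convexHull 𝕜 (insert w A) := convexHull_mono (subset_insert w A) hy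
    have hfxy : f x ∈ openSegment 𝕜 (f w) (f y) :=
      image_openSegment 𝕜 f.toAffineMap w y ▸ mem_image_of_mem f hxy
    exact absurd (hext.2 (mem_image_of_mem f hw) (mem_image_of_mem f hy') hfxy).symm hne

theorem not_isOpenMap_imageFactorization_convexHull_insert [TopologicalSpace V]
    [TopologicalSpace E] (f : V →ₗ[𝕜] E) (hw : w ∉ closure (convexHull 𝕜 A))
    (hacc : f w ∈ closure ((f '' convexHull 𝕜 (insert w A)).extremePoints 𝕜 \ {f w})) :
    ¬ IsOpenMap (imageFactorization f (convexHull 𝕜 (insert w A))) := by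
  intro hopen
  set C := convexHull 𝕜 (insert w A)
  set T := (f '' C).extremePoints 𝕜 \ {f w}
  let apex : C := ⟨w, subset_convexHull 𝕜 _ (mem_insert w A)⟩
  have hT : T ⊆ f '' C := sdiff_subset.trans extremePoints_subset
  have himage : imageFactorization f C apex ∈ closure (Subtype.val ⁻¹' T) := by
    rwa [closure_subtype, Subtype.image_preimage_coe, inter_eq_right.2 hT]
  have happrox : apex ∈ closure (imageFactorization f C ⁻¹' (Subtype.val ⁻¹' T)) :=
    hopen.preimage_closure_subset_closure_preimage himage
  exact hw <| map_mem_closure continuous_subtype_val happrox fun x hx =>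
    mem_convexHull_of_map_mem_extremePoints f x.2 hx.1 hx.2

end ConvexHullInsert

theorem sphere_subset_extremePoints_convexHull_sphere {E : Type*} [NormedAddCommGroup E]
    [NormedSpace ℝ E] [StrictConvexSpace ℝ E] (a : E) (r : ℝ) :
    Metric.sphere a r ⊆ (convexHull ℝ (Metric.sphere a r)).extremePoints ℝ := by
  obtain rfl | hr := eq_or_ne r 0
  · simp
  have hball : convexHull ℝ (Metric.sphere a r) ⊆ Metric.closedBall a r :=
    convexHull_min Metric.sphere_subset_closedBall (convex_closedBall a r)
  exact fun x hx => inter_extremePoints_subset_extremePoints_of_subset hball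
    ⟨subset_convexHull ℝ _ hx, StrictConvexSpace.sphere_subset_extremePoints_closedBall a hr hx⟩

/-- The Euclidean unit circle in `ℝ × ℝ`, given by its parametrization because the norm of `ℝ × ℝ`
is the sup norm. -/
def unitCircle : Set (ℝ × ℝ) := range fun t : ℝ => (cos t, sin t)

theorem equivRealProdCLM_image_sphere :
    Complex.equivRealProdCLM '' Metric.sphere 0 1 = unitCircle := by
  rw [← Complex.range_exp_mul_I, ← range_comp, unitCircle]
  congr with t <;> simp [Complex.exp_ofReal_mul_I_re, Complex.exp_ofReal_mul_I_im]

theorem unitCircle_subset_extremePoints_convexHull :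
    unitCircle ⊆ (convexHull ℝ unitCircle).extremePoints ℝ := by
  let e := Complex.equivRealProdCLM.toLinearEquiv
  have he : e '' Metric.sphere 0 1 = unitCircle := equivRealProdCLM_image_sphere
  have hhull : e '' convexHull ℝ (Metric.sphere 0 1) = convexHull ℝ unitCircle :=
    he ▸ e.toLinearMap.image_convexHull _
  calc
    unitCircle = e '' Metric.sphere 0 1 := he.symm
    _ ⊆ e '' (convexHull ℝ (Metric.sphere 0 1)).extremePoints ℝ :=
      image_mono (sphere_subset_extremePoints_convexHull_sphere 0 1)
    _ = (convexHull ℝ unitCircle).extremePoints ℝ := by rw [image_extremePoints, hhull]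

theorem one_zero_mem_unitCircle : ((1 : ℝ), (0 : ℝ)) ∈ unitCircle := ⟨0, by simp⟩

theorem one_zero_mem_closure_unitCircle_sdiff :
    ((1 : ℝ), (0 : ℝ)) ∈ closure (unitCircle \ {((1 : ℝ), (0 : ℝ))}) := by
  have hzero : (0 : ℝ) ∈ closure (Ioo 0 π) := by
    rw [closure_Ioo pi_pos.ne]
    exact left_mem_Icc.2 pi_pos.le
  have hmaps : MapsTo (fun t => (cos t, sin t)) (Ioo 0 π) (unitCircle \ {(1, 0)}) :=
    fun t ht => ⟨mem_range_self t, fun h => (sin_pos_of_mem_Ioo ht).ne' (congrArg Prod.snd h)⟩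
  simpa using map_mem_closure (by fun_prop) hzero hmaps

/-- The selection `(x, y) ↦ (x, y, 0)` of the theorem, as a linear map on the whole plane so that it
commutes with convex hulls. -/
def zeroSection : ℝ × ℝ →ₗ[ℝ] ℝ × ℝ × ℝ := LinearMap.id.prodMap (LinearMap.inl ℝ ℝ ℝ)

theorem projP_leftInverse_zeroSection : Function.LeftInverse projP zeroSection := fun _ => rfl

theorem coneC_eq_convexHull_insert :
    coneC = convexHull ℝ (insert (1, 0, 1) (zeroSection '' unitCircle)) := by
  have hperiodic : Function.Periodic (fun t : ℝ => (cos t, sin t, (0 : ℝ))) (2 * π) :=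
    fun t => by simp
  have hcircle : (fun t : ℝ => (cos t, sin t, (0 : ℝ))) '' Icc 0 (2 * π) =
      zeroSection '' unitCircle := by
    rw [unitCircle, ← range_comp]
    exact zero_add (2 * π) ▸ hperiodic.image_Icc two_pi_pos 0
  rw [coneC, hcircle, union_singleton]

theorem image_projP_coneC : projP '' coneC = convexHull ℝ unitCircle :=
  coneC_eq_convexHull_insert ▸
    image_convexHull_insert_image (f := projP.toLinearMap) projP_leftInverse_zeroSection
      one_zero_mem_unitCircle

theorem zeroSection_mem_coneC {u : ℝ × ℝ} (hu : u ∈ projP '' coneC) : zeroSection u ∈ coneC := by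
  rw [image_projP_coneC] at hu
  rw [coneC_eq_convexHull_insert]
  exact map_mem_convexHull_insert_image zeroSection hu

theorem apex_notMem_closure_convexHull_base :
    ((1 : ℝ), (0 : ℝ), (1 : ℝ)) ∉ closure (convexHull ℝ (zeroSection '' unitCircle)) := by
  have hplane : closure (convexHull ℝ (zeroSection '' unitCircle)) ⊆ {x | x.2.2 = 0} := by
    refine closure_minimal ?_ (isClosed_eq (by fun_prop) continuous_const)
    rw [← zeroSection.image_convexHull]
    rintro _ ⟨u, -, rfl⟩
    rfl
  exact fun h => one_ne_zero (hplane h)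

theorem not_isOpenMap_imageFactorization_projP_coneC :
    ¬ IsOpenMap (imageFactorization projP coneC) := by
  have hext : unitCircle ⊆ (projP '' coneC).extremePoints ℝ :=
    image_projP_coneC ▸ unitCircle_subset_extremePoints_convexHull
  have hacc : ((1 : ℝ), (0 : ℝ)) ∈
      closure ((projP '' coneC).extremePoints ℝ \ {((1 : ℝ), (0 : ℝ))}) :=
    closure_mono (sdiff_subset_sdiff_left hext) one_zero_mem_closure_unitCircle_sdiff
  rw [coneC_eq_convexHull_insert] at hacc ⊢
  exact not_isOpenMap_imageFactorization_convexHull_insert projP.toLinearMap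
    apex_notMem_closure_convexHull_base hacc

/-- Remark (2) after Theorem 2.1: the restriction `p|_C : C → p(C)` is not an open map, yet the
map `s : p(C) → C`, `s (x, y) = (x, y, 0)`, is a well-defined continuous right inverse of it. -/
theorem cone_not_open_but_selection :
    (¬ IsOpenMap (fun x : ↥coneC =>
      (⟨projP (x : ℝ × ℝ × ℝ), ⟨(x : ℝ × ℝ × ℝ), x.2, rfl⟩⟩ : ↥(⇑projP '' coneC)))) ∧
    ∃ h : ∀ u : ↥(⇑projP '' coneC), ((u : ℝ × ℝ).1, (u : ℝ × ℝ).2, (0 : ℝ)) ∈ coneC,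
      Continuous (fun u : ↥(⇑projP '' coneC) =>
        (⟨((u : ℝ × ℝ).1, (u : ℝ × ℝ).2, (0 : ℝ)), h u⟩ : ↥coneC)) ∧
      ∀ u : ↥(⇑projP '' coneC),
        projP (((u : ℝ × ℝ).1, (u : ℝ × ℝ).2, (0 : ℝ))) = (u : ℝ × ℝ) := by
  refine ⟨not_isOpenMap_imageFactorization_projP_coneC, fun u => zeroSection_mem_coneC u.2, ?_,
    fun u => projP_leftInverse_zeroSection u⟩
  exact Continuous.subtype_mk (by fun_prop) _
end

section
/- Let X and Y be real Banach spaces, let L : X → Y be a continuous linear surjection, let C ⊆ X be a convex subset whose affine span is finite-dimensional, and let x ∈ C. If the fiber L⁻¹(L(x)) meets the intrinsic interior (relative interior) of C, then L|_C : C → L(C) is open at x; that is, for every relatively open neighborhood W of x in C, the image L(W ∩ C) is a neighborhood of L(x) in L(C). -/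
open Topology

/-!
Let `z ∈ L⁻¹(L x)` be an intrinsic interior point of `C`. Every point `p` of the open segment from
`x` to `z` is again in the intrinsic interior of `C`, lies in the same fiber, and can be taken as
close to `x` as desired, in particular inside `W`. Near such a `p` the set `C` coincides with its
affine span `A`, and `L` is open from `A` onto `L(A)` because `L(A)` is finite-dimensional. Hence
`L(W ∩ C)` is a neighborhood of `L p = L x` even in `L(A)`.
-/

open Filter Set

section AffineMap

variable {𝕜 V W P Q : Type*} [NontriviallyNormedField 𝕜] [CompleteSpace 𝕜]
  [AddCommGroup V] [Module 𝕜 V] [TopologicalSpace V] [ContinuousSMul 𝕜 V]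
  [TopologicalSpace P] [AddTorsor V P] [IsTopologicalAddTorsor P]
  [AddCommGroup W] [Module 𝕜 W] [TopologicalSpace W] [ContinuousSMul 𝕜 W] [T2Space W]
  [TopologicalSpace Q] [AddTorsor W Q] [IsTopologicalAddTorsor Q]

theorem affineMap_isOpenMap_of_finiteDimensional [FiniteDimensional 𝕜 W] (f : P →ᵃ[𝕜] Q)
    (hf : Function.Surjective f) : IsOpenMap f :=
  have := IsTopologicalAddTorsor.to_isTopologicalAddGroup V P
  have := IsTopologicalAddTorsor.to_isTopologicalAddGroup W Q
  AffineMap.isOpenMap_linear_iff.mp <|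
    f.linear.isOpenMap_of_finiteDimensional (f.linear_surjective_iff.mpr hf)

theorem affineMap_nhdsWithin_image_le (f : P →ᵃ[𝕜] Q) (S : AffineSubspace 𝕜 P)
    [FiniteDimensional 𝕜 (S.map f).direction] {p : P} (hp : p ∈ S) :
    𝓝[f '' S] (f p) ≤ map f (𝓝[S] p) := by
  have : Nonempty S := ⟨⟨p, hp⟩⟩
  let g : S →ᵃ[𝕜] S.map f := f.restrict le_rfl
  have hg : IsOpenMap g :=
    affineMap_isOpenMap_of_finiteDimensional g (AffineMap.restrict.surjective f rfl)
  calc 𝓝[f '' S] (f p) = map (↑) (𝓝 (g ⟨p, hp⟩)) := (map_nhds_subtype_val (g ⟨p, hp⟩)).symm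
    _ ≤ map (↑) (map g (𝓝 ⟨p, hp⟩)) := map_mono (hg.nhds_le _)
    _ = map f (map (↑) (𝓝 (⟨p, hp⟩ : S))) := rfl
    _ = map f (𝓝[S] p) := congrArg (map f) (map_nhds_subtype_val (s := S) ⟨p, hp⟩)

end AffineMap

section IntrinsicInterior

theorem mem_nhdsWithin_affineSpan_of_mem_intrinsicInterior {𝕜 V P : Type*} [Ring 𝕜]
    [AddCommGroup V] [Module 𝕜 V] [TopologicalSpace P] [AddTorsor V P] {s : Set P} {p : P}
    (hp : p ∈ intrinsicInterior 𝕜 s) : s ∈ 𝓝[affineSpan 𝕜 s] p := by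
  obtain ⟨q, hq, rfl⟩ := mem_intrinsicInterior.mp hp
  exact preimage_coe_mem_nhds_subtype.mp (mem_interior_iff_mem_nhds.mp hq)

variable {𝕜 E : Type*} [Field 𝕜] [LinearOrder 𝕜] [IsStrictOrderedRing 𝕜]
  [TopologicalSpace 𝕜] [AddCommGroup E] [Module 𝕜 E] [TopologicalSpace E]
  [IsTopologicalAddGroup E] [ContinuousSMul 𝕜 E] {C : Set E} {x z : E}

-- The homothety with center `x` and ratio `t` maps `C` into itself and is open on the affine span.
theorem lineMap_mem_intrinsicInterior_of_convex (hC : Convex 𝕜 C) (hx : x ∈ C)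
    (hz : z ∈ intrinsicInterior 𝕜 C) {t : 𝕜} (ht : t ∈ Ioc 0 1) :
    AffineMap.lineMap x z t ∈ intrinsicInterior 𝕜 C := by
  obtain ⟨b, hb, rfl⟩ := mem_intrinsicInterior.mp hz
  let a : affineSpan 𝕜 C := ⟨x, subset_affineSpan 𝕜 C hx⟩
  have : Nonempty (affineSpan 𝕜 C) := ⟨a⟩
  let h : affineSpan 𝕜 C →ᵃ[𝕜] affineSpan 𝕜 C := AffineMap.homothety a t
  have h_open : IsOpenMap h := AffineMap.homothety_isOpenMap a t ht.1.ne'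
  have h_maps : MapsTo h ((↑) ⁻¹' C) ((↑) ⁻¹' C) := fun y hy ↦
    hC.lineMap_mem hx hy (Ioc_subset_Icc_self ht)
  exact mem_intrinsicInterior.mpr ⟨h b, h_open.mapsTo_interior h_maps hb, rfl⟩

theorem exists_lineMap_mem_inter_intrinsicInterior_of_convex [OrderTopology 𝕜]
    (hC : Convex 𝕜 C) (hx : x ∈ C) (hz : z ∈ intrinsicInterior 𝕜 C) {U : Set E}
    (hU : U ∈ 𝓝 x) :
    ∃ t : 𝕜, AffineMap.lineMap x z t ∈ U ∩ intrinsicInterior 𝕜 C := by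
  have h_tendsto : Tendsto (AffineMap.lineMap x z : 𝕜 → E) (𝓝[>] 0) (𝓝 x) :=
    tendsto_nhdsWithin_of_tendsto_nhds <| by
      simpa using (AffineMap.lineMap_continuous (p := x) (q := z)).tendsto (0 : 𝕜)
  obtain ⟨t, htU, ht⟩ :=
    ((h_tendsto.eventually_mem hU).and (Ioc_mem_nhdsGT zero_lt_one)).exists
  exact ⟨t, htU, lineMap_mem_intrinsicInterior_of_convex hC hx hz ht⟩

end IntrinsicInterior

theorem restriction_open_at_point_of_fiber_meets_intrinsicInterior_general
    {E W Q : Type*} [AddCommGroup E] [Module ℝ E] [TopologicalSpace E]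
    [IsTopologicalAddGroup E] [ContinuousSMul ℝ E]
    [AddCommGroup W] [Module ℝ W] [TopologicalSpace W] [ContinuousSMul ℝ W] [T2Space W]
    [TopologicalSpace Q] [AddTorsor W Q] [IsTopologicalAddTorsor Q]
    (f : E →ᵃ[ℝ] Q) {C : Set E} (hC : Convex ℝ C)
    [FiniteDimensional ℝ ((affineSpan ℝ C).map f).direction] {x : E} (hx : x ∈ C)
    (hfib : (f ⁻¹' {f x} ∩ intrinsicInterior ℝ C).Nonempty) {U : Set E} (hU : IsOpen U)
    (hxU : x ∈ U) : f '' (U ∩ C) ∈ 𝓝[f '' affineSpan ℝ C] (f x) := by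
  obtain ⟨z, hfz : f z = f x, hz⟩ := hfib
  obtain ⟨t, htU, htC⟩ :=
    exists_lineMap_mem_inter_intrinsicInterior_of_convex hC hx hz (hU.mem_nhds hxU)
  set p := AffineMap.lineMap x z t
  have hfp : f p = f x := by simp [p, AffineMap.apply_lineMap, hfz]
  have hp : p ∈ affineSpan ℝ C := subset_affineSpan ℝ C (intrinsicInterior_subset htC)
  have hUC : U ∩ C ∈ 𝓝[affineSpan ℝ C] p :=
    inter_mem (mem_nhdsWithin_of_mem_nhds (hU.mem_nhds htU))
      (mem_nhdsWithin_affineSpan_of_mem_intrinsicInterior htC)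
  rw [← hfp]
  exact affineMap_nhdsWithin_image_le f _ hp (image_mem_map hUC)

/-- Cases (1) and (2) of the proof of Theorem 2.3: if `C ⊆ X` is convex with finite-dimensional
affine span, `x ∈ C`, and the fiber `L⁻¹(L x)` meets the intrinsic interior of `C`, then
`L|_C : C → L(C)` is open at `x`: for every open `W ∋ x`, the image `L(W ∩ C)` is a
neighborhood of `L x` in `L(C)`. -/
theorem restriction_open_at_point_of_fiber_meets_intrinsicInterior
    {X Y : Type*} [NormedAddCommGroup X] [NormedSpace ℝ X] [CompleteSpace X]
    [NormedAddCommGroup Y] [NormedSpace ℝ Y] [CompleteSpace Y]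
    (L : X →L[ℝ] Y) (hL : Function.Surjective L)
    (C : Set X) (hC : Convex ℝ C)
    (hfd : FiniteDimensional ℝ (affineSpan ℝ C).direction)
    (x : X) (hx : x ∈ C)
    (hfib : (⇑L ⁻¹' {L x} ∩ intrinsicInterior ℝ C).Nonempty) :
    ∀ W : Set X, IsOpen W → x ∈ W → ⇑L '' (W ∩ C) ∈ 𝓝[⇑L '' C] (L x) := by
  intro W hW hxW
  let f : X →ᵃ[ℝ] Y := L.toLinearMap.toAffineMap
  have : FiniteDimensional ℝ ((affineSpan ℝ C).map f).direction := by
    rw [AffineSubspace.map_direction]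
    infer_instance
  exact nhdsWithin_mono _ (image_mono (subset_affineSpan ℝ C))
    (restriction_open_at_point_of_fiber_meets_intrinsicInterior_general f hC hx hfib hW hxW)
end

section
/- Let Z be a real Banach space and let (eₙ)ₙ≥₁ be a sequence in Z with ‖eₙ‖ = 1 for all n, admitting biorthogonal continuous linear functionals, i.e., continuous linear functionals φₖ : Z → ℝ with φₖ(eⱼ) = 1 if k = j and 0 otherwise. Let P : Z → Z be a continuous linear projection with P(e₁) = 0 and P(eₙ) = eₙ for all n ≥ 2, and let C be the closed convex hull of the set {eₙ/n : n ≥ 1} ∪ {2e₁ − eₙ/n : n ≥ 1}. Then C is a compact convex set, and for every neighborhood U of 0 in Z there is no continuous map s : P(C) ∩ U → C satisfying P(s(y)) = y for all y ∈ P(C) ∩ U; in particular, the restriction P|_C : C → P(C) is not open at the point e₁. -/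
open Topology

/-!
Write `C` for the closed convex hull. For `n ≥ 2` the functional `φₙ ∘ P` is `1/n` at `eₙ/n`, `-1/n`
at `2e₁ - eₙ/n` and `0` at all other generators of `C`. Since the generators are bounded, this gap
passes to the closed convex hull, so `eₙ/n` is the only point of `C` over `P (eₙ/n)`; by symmetry
about `e₁`, `2e₁ - eₙ/n` is the only point of `C` over `-P (eₙ/n)`. These values of `P` tend to `0`,
so a continuous selection near `0` would take at `0` both `lim eₙ/n = 0` and
`lim (2e₁ - eₙ/n) = 2e₁`. In the same way, openness at `e₁` would force `eₙ/n → e₁`.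
-/

open Bornology Filter Set

section SingletonFibers

variable {X Y ι : Type*} [TopologicalSpace X] [TopologicalSpace Y] {f : X → Y} {C : Set X}
  {l : Filter ι} {u : ι → X}

theorem tendsto_of_forall_isOpen_image_inter_mem_nhdsWithin {a : X}
    (hopen : ∀ W : Set X, IsOpen W → a ∈ W → f '' (W ∩ C) ∈ 𝓝[f '' C] (f a))
    (huC : ∀ i, u i ∈ C) (hfib : ∀ᶠ i in l, ∀ z ∈ C, f z = f (u i) → z = u i)
    (hfu : Tendsto (fun i => f (u i)) l (𝓝 (f a))) :
    Tendsto u l (𝓝 a) := by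
  refine tendsto_nhds.2 fun W hW haW => ?_
  have hfuC : Tendsto (fun i => f (u i)) l (𝓝[f '' C] (f a)) :=
    tendsto_nhdsWithin_iff.2 ⟨hfu, .of_forall fun i => mem_image_of_mem f (huC i)⟩
  filter_upwards [hfuC (hopen W hW haW), hfib] with i ⟨z, ⟨hzW, hzC⟩, hz⟩ hi
  rwa [mem_preimage, ← hi z hzC hz]

theorem tendsto_continuous_selection {b : Y} {U : Set Y} {s : ↥(f '' C ∩ U) → ↥C}
    (hs : Continuous s) (hfs : ∀ y, f (s y) = y) (hb : b ∈ f '' C) (hU : U ∈ 𝓝 b)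
    (huC : ∀ i, u i ∈ C) (hfib : ∀ᶠ i in l, ∀ z ∈ C, f z = f (u i) → z = u i)
    (hfu : Tendsto (fun i => f (u i)) l (𝓝 b)) :
    Tendsto u l (𝓝 (s ⟨b, hb, mem_of_mem_nhds hU⟩ : X)) := by
  refine tendsto_iff_forall_eventually_mem.2 fun W hW => ?_
  obtain ⟨V, hV, hVW⟩ := mem_nhds_subtype _ _ _ |>.1
    ((continuous_subtype_val.comp hs).continuousAt.preimage_mem_nhds hW)
  filter_upwards [hfu hV, hfu hU, hfib] with i hiV hiU hi
  let y : ↥(f '' C ∩ U) := ⟨f (u i), mem_image_of_mem f (huC i), hiU⟩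
  have hsy : (s y : X) = u i := hi _ (s y).2 (hfs y)
  exact hsy ▸ hVW (show y ∈ Subtype.val ⁻¹' V from hiV)

end SingletonFibers

section ClosedConvexHull

variable {E : Type*}

theorem isCompact_closedConvexHull_of_totallyBounded [AddCommGroup E] [Module ℝ E]
    [UniformSpace E] [IsUniformAddGroup E] [ContinuousSMul ℝ E] [LocallyConvexSpace ℝ E]
    [CompleteSpace E] {S : Set E} (hS : TotallyBounded S) :
    IsCompact (closedConvexHull ℝ S) := by
  rw [closedConvexHull_eq_closure_convexHull]
  exact hS.convexHull.closure.isCompact_of_isClosed isClosed_closure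

variable [NormedAddCommGroup E] [NormedSpace ℝ E] {S : Set E} {f : E →L[ℝ] ℝ} {q z : E}

theorem dist_le_mul_sub_of_mem_closedConvexHull {K : ℝ}
    (hS : ∀ w ∈ S, dist w q ≤ K * (f q - f w)) (hz : z ∈ closedConvexHull ℝ S) :
    dist z q ≤ K * (f q - f z) := by
  have hconv : Convex ℝ {w | dist w q ≤ K * (f q - f w)} := by
    have hcvx : ConvexOn ℝ univ fun w => dist w q + (K • f) w :=
      (convexOn_dist q convex_univ).add ((K • f : E →L[ℝ] ℝ).toLinearMap.convexOn convex_univ)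
    convert hcvx.convex_le (K * f q) using 1
    ext w
    simp [mul_sub, le_sub_iff_add_le]
  have hclosed : IsClosed {w | dist w q ≤ K * (f q - f w)} :=
    isClosed_le (by fun_prop) (by fun_prop)
  exact closedConvexHull_min hS hconv hclosed hz

theorem eq_of_mem_closedConvexHull_of_gap {c : ℝ} (hbdd : IsBounded S) (hc : 0 < c)
    (hgap : ∀ w ∈ S, w ≠ q → f w + c ≤ f q) (hz : z ∈ closedConvexHull ℝ S) (hfz : f z = f q) :
    z = q := by
  obtain ⟨R, hR⟩ := hbdd.subset_closedBall q
  have hS : ∀ w ∈ S, dist w q ≤ R / c * (f q - f w) := by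
    intro w hw
    rcases eq_or_ne w q with rfl | hwq
    · simp
    have hwR : dist w q ≤ R := hR hw
    calc dist w q ≤ R / c * c := by rwa [div_mul_cancel₀ _ hc.ne']
      _ ≤ R / c * (f q - f w) := by
        have : 0 ≤ R / c := div_nonneg (dist_nonneg.trans hwR) hc.le
        gcongr
        linarith [hgap w hw hwq]
  have hdist := dist_le_mul_sub_of_mem_closedConvexHull hS hz
  rwa [hfz, sub_self, mul_zero, dist_le_zero] at hdist

end ClosedConvexHull

/-- The closed convex hull of a family `x` together with its reflection `i ↦ 2p - x i` through `p`;
with `x n = eₙ/n` and `p = e₁` it is the set `C` of the theorem. -/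
def closedSymmetricHull {E ι : Type*} [AddCommGroup E] [Module ℝ E] [TopologicalSpace E]
    (x : ι → E) (p : E) : Set E :=
  closedConvexHull ℝ (range x ∪ range fun i => (2 : ℝ) • p - x i)

namespace closedSymmetricHull

variable {E ι : Type*}

section TopologicalModule

variable [AddCommGroup E] [Module ℝ E] [TopologicalSpace E] (x : ι → E) (p : E)

theorem convex : Convex ℝ (closedSymmetricHull x p) :=
  convex_closedConvexHull

theorem apply_mem (i : ι) : x i ∈ closedSymmetricHull x p :=
  subset_closedConvexHull (.inl (mem_range_self i))

theorem reflection_apply_mem (i : ι) : (2 : ℝ) • p - x i ∈ closedSymmetricHull x p :=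
  subset_closedConvexHull (.inr (mem_range_self i))

theorem center_mem [Nonempty ι] : p ∈ closedSymmetricHull x p := by
  obtain ⟨i⟩ := ‹Nonempty ι›
  have hmid : midpoint ℝ (x i) ((2 : ℝ) • p - x i) = p := by
    rw [midpoint_eq_smul_add]
    simp
  simpa only [hmid] using (convex x p).midpoint_mem (apply_mem x p i) (reflection_apply_mem x p i)

variable {x p}

theorem reflection_mem [IsTopologicalAddGroup E] {z : E} (hz : z ∈ closedSymmetricHull x p) :
    (2 : ℝ) • p - z ∈ closedSymmetricHull x p := by
  have hgen : range x ∪ (range fun i => (2 : ℝ) • p - x i) ⊆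
      (fun w => (2 : ℝ) • p - w) ⁻¹' closedSymmetricHull x p := by
    rintro _ (⟨i, rfl⟩ | ⟨i, rfl⟩)
    · exact reflection_apply_mem x p i
    · simpa using apply_mem x p i
  have hconv : Convex ℝ ((fun w => (2 : ℝ) • p - w) ⁻¹' closedSymmetricHull x p) :=
    (convex x p).affine_preimage (AffineMap.const ℝ E ((2 : ℝ) • p) - AffineMap.id ℝ E)
  have hclosed : IsClosed ((fun w => (2 : ℝ) • p - w) ⁻¹' closedSymmetricHull x p) :=
    isClosed_closedConvexHull.preimage (by fun_prop)
  exact closedConvexHull_min hgen hconv hclosed hz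

end TopologicalModule

theorem isCompact [AddCommGroup E] [Module ℝ E] [UniformSpace E] [IsUniformAddGroup E]
    [ContinuousSMul ℝ E] [LocallyConvexSpace ℝ E] [CompleteSpace E] {x : ι → E} {a : E}
    (hx : Tendsto x cofinite (𝓝 a)) (p : E) : IsCompact (closedSymmetricHull x p) := by
  have hx' := hx.const_sub ((2 : ℝ) • p)
  exact isCompact_closedConvexHull_of_totallyBounded <|
    (hx.isCompact_insert_range_of_cofinite.union
      hx'.isCompact_insert_range_of_cofinite).totallyBounded.subset
      (union_subset_union (subset_insert _ _) (subset_insert _ _))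

section Normed

variable [NormedAddCommGroup E] [NormedSpace ℝ E] {x : ι → E} {p z : E} {f : E →L[ℝ] ℝ} {i : ι}

theorem eq_apply_of_map_eq (hx : IsBounded (range x)) (hfp : f p = 0) (hfi : 0 < f (x i))
    (hfj : ∀ j ≠ i, f (x j) = 0) (hz : z ∈ closedSymmetricHull x p) (hfz : f z = f (x i)) :
    z = x i := by
  have hx' : IsBounded (range fun j => (2 : ℝ) • p - x j) := by
    have := (isBounded_singleton (x := (2 : ℝ) • p)).sub hx
    rwa [singleton_sub, ← range_comp] at this
  refine eq_of_mem_closedConvexHull_of_gap (hx.union hx') hfi ?_ hz hfz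
  rintro _ (⟨j, rfl⟩ | ⟨j, rfl⟩) hj
  · rw [hfj j (fun hji => hj (hji ▸ rfl)), zero_add]
  · rcases eq_or_ne j i with rfl | hji
    · simp [hfp, hfi.le]
    · simp [hfp, hfj j hji]

theorem eq_reflection_apply_of_map_eq (hx : IsBounded (range x)) (hfp : f p = 0)
    (hfi : 0 < f (x i)) (hfj : ∀ j ≠ i, f (x j) = 0) (hz : z ∈ closedSymmetricHull x p)
    (hfz : f z = -f (x i)) : z = (2 : ℝ) • p - x i := by
  have hreflect : (2 : ℝ) • p - z = x i :=
    eq_apply_of_map_eq hx hfp hfi hfj (reflection_mem hz) (by simp [hfp, hfz])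
  rw [← hreflect, sub_sub_cancel]

variable {Y : Type*} [AddCommGroup Y] [Module ℝ Y] [TopologicalSpace Y] {P : E →L[ℝ] Y}

theorem eventually_eq_apply_of_map_eq {l : Filter ι} (hx : IsBounded (range x)) (hPp : P p = 0)
    (hsep : ∀ᶠ i in l, ∃ ψ : Y →L[ℝ] ℝ, 0 < ψ (P (x i)) ∧ ∀ j ≠ i, ψ (P (x j)) = 0) :
    ∀ᶠ i in l, ∀ z ∈ closedSymmetricHull x p, P z = P (x i) → z = x i := by
  filter_upwards [hsep] with i ⟨ψ, hψi, hψj⟩ z hz hPz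
  exact eq_apply_of_map_eq (f := ψ.comp P) hx (by simp [hPp]) hψi hψj hz (congrArg ψ hPz)

theorem eventually_eq_reflection_apply_of_map_eq {l : Filter ι} (hx : IsBounded (range x))
    (hPp : P p = 0)
    (hsep : ∀ᶠ i in l, ∃ ψ : Y →L[ℝ] ℝ, 0 < ψ (P (x i)) ∧ ∀ j ≠ i, ψ (P (x j)) = 0) :
    ∀ᶠ i in l, ∀ z ∈ closedSymmetricHull x p,
      P z = P ((2 : ℝ) • p - x i) → z = (2 : ℝ) • p - x i := by
  filter_upwards [hsep] with i ⟨ψ, hψi, hψj⟩ z hz hPz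
  exact eq_reflection_apply_of_map_eq (f := ψ.comp P) hx (by simp [hPp]) hψi hψj hz
    (by simp [hPz, hPp])

variable [Infinite ι]

theorem not_exists_continuous_selection (hx : Tendsto x cofinite (𝓝 0)) (hp : p ≠ 0)
    (hPp : P p = 0)
    (hsep : ∀ᶠ i in cofinite, ∃ ψ : Y →L[ℝ] ℝ, 0 < ψ (P (x i)) ∧ ∀ j ≠ i, ψ (P (x j)) = 0)
    {U : Set Y} (hU : U ∈ 𝓝 0) :
    ¬ ∃ s : ↥(P '' closedSymmetricHull x p ∩ U) → ↥(closedSymmetricHull x p),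
      Continuous s ∧ ∀ y, P (s y) = y := by
  rintro ⟨s, hs, hPs⟩
  have hbdd : IsBounded (range x) :=
    hx.isCompact_insert_range_of_cofinite.isBounded.subset (subset_insert _ _)
  have hx' : Tendsto (fun i => (2 : ℝ) • p - x i) cofinite (𝓝 ((2 : ℝ) • p)) := by
    simpa using hx.const_sub ((2 : ℝ) • p)
  have hPx : Tendsto (fun i => P (x i)) cofinite (𝓝 0) := by
    simpa [Function.comp_def] using (P.continuous.tendsto 0).comp hx
  have hPx' : Tendsto (fun i => P ((2 : ℝ) • p - x i)) cofinite (𝓝 0) := by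
    simpa [Function.comp_def, hPp] using (P.continuous.tendsto _).comp hx'
  have h0 : 0 ∈ P '' closedSymmetricHull x p := ⟨p, center_mem x p, hPp⟩
  have hs0 := tendsto_continuous_selection hs hPs h0 hU (apply_mem x p)
    (eventually_eq_apply_of_map_eq hbdd hPp hsep) hPx
  have hs0' := tendsto_continuous_selection hs hPs h0 hU (reflection_apply_mem x p)
    (eventually_eq_reflection_apply_of_map_eq hbdd hPp hsep) hPx'
  have h2p : (2 : ℝ) • p = 0 := (tendsto_nhds_unique hx' hs0').trans (tendsto_nhds_unique hs0 hx)
  exact hp (by simpa using h2p)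

theorem not_forall_isOpen_image_inter_mem_nhdsWithin (hx : Tendsto x cofinite (𝓝 0))
    (hp : p ≠ 0) (hPp : P p = 0)
    (hsep : ∀ᶠ i in cofinite, ∃ ψ : Y →L[ℝ] ℝ, 0 < ψ (P (x i)) ∧ ∀ j ≠ i, ψ (P (x j)) = 0) :
    ¬ ∀ W : Set E, IsOpen W → p ∈ W →
      P '' (W ∩ closedSymmetricHull x p) ∈ 𝓝[P '' closedSymmetricHull x p] (P p) := by
  intro hopen
  have hbdd : IsBounded (range x) :=
    hx.isCompact_insert_range_of_cofinite.isBounded.subset (subset_insert _ _)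
  have hPx : Tendsto (fun i => P (x i)) cofinite (𝓝 (P p)) := by
    simpa [Function.comp_def, hPp] using (P.continuous.tendsto 0).comp hx
  have hxp : Tendsto x cofinite (𝓝 p) :=
    tendsto_of_forall_isOpen_image_inter_mem_nhdsWithin hopen (apply_mem x p)
      (eventually_eq_apply_of_map_eq hbdd hPp hsep) hPx
  exact hp (tendsto_nhds_unique hxp hx)

end Normed

end closedSymmetricHull

theorem setOf_exists_one_le_eq_range_pnat {α : Type*} (g : ℕ → α) :
    {a | ∃ n : ℕ, 1 ≤ n ∧ a = g n} = range fun n : ℕ+ => g n := by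
  ext a
  exact ⟨fun ⟨n, hn, ha⟩ => ⟨⟨n, hn⟩, ha.symm⟩, fun ⟨n, ha⟩ => ⟨n, n.pos, ha.symm⟩⟩

theorem tendsto_pnat_inv_smul_cofinite {E : Type*} [NormedAddCommGroup E] [NormedSpace ℝ E]
    {v : ℕ+ → E} {R : ℝ} (hv : ∀ n, ‖v n‖ ≤ R) :
    Tendsto (fun n : ℕ+ => ((n : ℕ) : ℝ)⁻¹ • v n) cofinite (𝓝 0) := by
  have hinv : Tendsto (fun n : ℕ+ => ((n : ℕ) : ℝ)⁻¹) cofinite (𝓝 0) := by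
    have := tendsto_inv_atTop_nhds_zero_nat (𝕜 := ℝ)
    rw [← Nat.cofinite_eq_atTop] at this
    exact this.comp PNat.coe_injective.tendsto_cofinite
  exact hinv.zero_smul_isBoundedUnder_le (isBoundedUnder_of ⟨R, hv⟩)

theorem eventually_exists_separating_pnat_inv_smul {Y : Type*} [AddCommGroup Y] [Module ℝ Y]
    [TopologicalSpace Y] {v : ℕ → Y} {ψ : ℕ → Y →L[ℝ] ℝ} (hv : v 1 = 0)
    (hψ : ∀ k j, 2 ≤ k → 2 ≤ j → ψ k (v j) = if k = j then 1 else 0) :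
    ∀ᶠ n : ℕ+ in cofinite, ∃ χ : Y →L[ℝ] ℝ, 0 < χ (((n : ℕ) : ℝ)⁻¹ • v n) ∧
      ∀ j : ℕ+, j ≠ n → χ (((j : ℕ) : ℝ)⁻¹ • v j) = 0 := by
  have two_le {n : ℕ+} (hn : n ≠ 1) : 2 ≤ (n : ℕ) :=
    PNat.coe_lt_coe 1 n |>.2 (one_le.lt_of_ne' hn)
  filter_upwards [eventually_cofinite_ne 1] with n hn
  refine ⟨ψ n, by simp [hψ n n (two_le hn) (two_le hn)], fun j hjn => ?_⟩
  rcases eq_or_ne j 1 with rfl | hj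
  · simp [hv]
  · simp [hψ n j (two_le hn) (two_le hj), hjn.symm]

theorem projection_restriction_not_locally_invertible_general
    {Z Y ι : Type*} [NormedAddCommGroup Z] [NormedSpace ℝ Z] [CompleteSpace Z]
    [AddCommGroup Y] [Module ℝ Y] [TopologicalSpace Y] [Infinite ι]
    {x : ι → Z} (hx : Tendsto x cofinite (𝓝 0)) {p : Z} (hp : p ≠ 0)
    (P : Z →L[ℝ] Y) (hPp : P p = 0)
    (hsep : ∀ᶠ i in cofinite, ∃ ψ : Y →L[ℝ] ℝ, 0 < ψ (P (x i)) ∧ ∀ j ≠ i, ψ (P (x j)) = 0) :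
    IsCompact (closedSymmetricHull x p) ∧ Convex ℝ (closedSymmetricHull x p) ∧
    (∀ U ∈ 𝓝 (0 : Y),
      ¬ ∃ s : ↥(⇑P '' closedSymmetricHull x p ∩ U) → ↥(closedSymmetricHull x p), Continuous s ∧
        ∀ y : ↥(⇑P '' closedSymmetricHull x p ∩ U), P (s y : Z) = (y : Y)) ∧
    ¬ ∀ W : Set Z, IsOpen W → p ∈ W →
      ⇑P '' (W ∩ closedSymmetricHull x p) ∈ 𝓝[⇑P '' closedSymmetricHull x p] (P p) :=
  ⟨closedSymmetricHull.isCompact hx p, closedSymmetricHull.convex x p,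
    fun _ hU => closedSymmetricHull.not_exists_continuous_selection hx hp hPp hsep hU,
    closedSymmetricHull.not_forall_isOpen_image_inter_mem_nhdsWithin hx hp hPp hsep⟩

/-- Theorem 2.4: let `(eₙ)` be a normalized sequence in a Banach space `Z` admitting
biorthogonal continuous linear functionals, let `P` be a continuous linear projection with
`P e₁ = 0` and `P eₙ = eₙ` for `n ≥ 2`, and let `C` be the closed convex hull of
`{eₙ/n} ∪ {2e₁ - eₙ/n}`. Then `C` is a compact convex set, the inverse `(P|_C)⁻¹` admits no
continuous selection over any neighborhood of `P e₁ = 0`, and `P|_C` is not open at `e₁`. -/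
theorem projection_restriction_not_locally_invertible
    {Z : Type*} [NormedAddCommGroup Z] [NormedSpace ℝ Z] [CompleteSpace Z]
    (e : ℕ → Z) (he : ∀ n, 1 ≤ n → ‖e n‖ = 1)
    (φ : ℕ → Z →L[ℝ] ℝ)
    (hbi : ∀ k j, 1 ≤ k → 1 ≤ j → φ k (e j) = if k = j then 1 else 0)
    (P : Z →L[ℝ] Z) (hPP : ∀ z, P (P z) = P z)
    (hP1 : P (e 1) = 0) (hPn : ∀ n, 2 ≤ n → P (e n) = e n)
    (C : Set Z)
    (hC : C = closure (convexHull ℝ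
      ({z : Z | ∃ n : ℕ, 1 ≤ n ∧ z = (n : ℝ)⁻¹ • e n} ∪
        {z : Z | ∃ n : ℕ, 1 ≤ n ∧ z = (2 : ℝ) • e 1 - (n : ℝ)⁻¹ • e n}))) :
    IsCompact C ∧ Convex ℝ C ∧
    (∀ U ∈ 𝓝 (0 : Z),
      ¬ ∃ s : ↥(⇑P '' C ∩ U) → ↥C, Continuous s ∧
        ∀ y : ↥(⇑P '' C ∩ U), P (s y : Z) = (y : Z)) ∧
    ¬ ∀ W : Set Z, IsOpen W → e 1 ∈ W → ⇑P '' (W ∩ C) ∈ 𝓝[⇑P '' C] (P (e 1)) := by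
  have hCx : C = closedSymmetricHull (fun n : ℕ+ => ((n : ℕ) : ℝ)⁻¹ • e n) (e 1) := by
    rw [hC, setOf_exists_one_le_eq_range_pnat, setOf_exists_one_le_eq_range_pnat,
      ← closedConvexHull_eq_closure_convexHull, closedSymmetricHull]
  have he1 : e 1 ≠ 0 := norm_ne_zero_iff.1 (by simp [he 1 le_rfl])
  have hx := tendsto_pnat_inv_smul_cofinite (v := fun n => e n) fun n => (he n n.pos).le
  have hφP : ∀ k j, 2 ≤ k → 2 ≤ j → φ k (P (e j)) = if k = j then 1 else 0 := fun k j hk hj => by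
    rw [hPn j hj, hbi k j (by omega) (by omega)]
  subst hCx
  refine projection_restriction_not_locally_invertible_general hx he1 P hP1 ?_
  simpa only [map_smul] using
    eventually_exists_separating_pnat_inv_smul (v := fun n => P (e n)) hP1 hφP
end

section
/- Let Z be a real Banach space and let (eₙ)ₙ≥₁ be a sequence in Z with ‖eₙ‖ = 1 for all n, admitting biorthogonal continuous linear functionals φₖ : Z → ℝ with φₖ(eⱼ) = 1 if k = j and 0 otherwise. Let C be the closed convex hull of the set {eₙ/n : n ≥ 1} ∪ {2e₁ − eₙ/n : n ≥ 1}. Then for every λ > 0 and every n ≥ 2, the point z = λe₁ + eₙ/n satisfies dist(z, C) > 0; in particular z ∉ C. -/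
/-!
The functional `φₙ / aₙ` equals `1` at the generator `aₙ eₙ` and is nonpositive at every other
generator, whereas `φ₁` is bounded on the generators and vanishes at `aₙ eₙ`. Hence all generators,
and with them `C`, lie in a closed convex cone `|φ₁| ≤ M (1 - φₙ / aₙ)` with apex `aₙ eₙ`. This cone
meets the hyperplane `φₙ / aₙ = 1` only where `φ₁ = 0`, but `φ₁ (λ e₁ + aₙ eₙ) = λ`.
-/

section Cone

variable {E : Type*} [AddCommGroup E] [Module ℝ E] [TopologicalSpace E] {S : Set E} {x₀ z : E}

theorem apply_le_of_mem_closure_convexHull {f : E →L[ℝ] ℝ} {c : ℝ} (hS : ∀ y ∈ S, f y ≤ c)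
    (hz : z ∈ closure (convexHull ℝ S)) : f z ≤ c :=
  closure_minimal (convexHull_min hS (convex_halfSpace_le f.toLinearMap.isLinear c))
    (isClosed_le f.continuous continuous_const) hz

theorem abs_apply_sub_le_of_mem_closure_convexHull {p q : E →L[ℝ] ℝ} {M : ℝ}
    (hS : ∀ y ∈ S, |q y - q x₀| ≤ M * (p x₀ - p y)) (hz : z ∈ closure (convexHull ℝ S)) :
    |q z - q x₀| ≤ M * (p x₀ - p z) := by
  have upper : (M • p + q) z ≤ M * p x₀ + q x₀ :=
    apply_le_of_mem_closure_convexHull (fun y hy ↦ by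
      have := (abs_le.1 (hS y hy)).2
      simp only [add_apply, smul_apply, smul_eq_mul]
      linarith) hz
  have lower : (M • p + -q) z ≤ M * p x₀ - q x₀ :=
    apply_le_of_mem_closure_convexHull (fun y hy ↦ by
      have := (abs_le.1 (hS y hy)).1
      simp only [add_apply, smul_apply, neg_apply, smul_eq_mul]
      linarith) hz
  simp only [add_apply, smul_apply, neg_apply, smul_eq_mul] at upper lower
  exact abs_le.2 ⟨by linarith, by linarith⟩

theorem notMem_closure_convexHull_of_apply_eq_of_apply_ne {p q : E →L[ℝ] ℝ} {M : ℝ}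
    (hS : ∀ y ∈ S, |q y - q x₀| ≤ M * (p x₀ - p y)) (hp : p z = p x₀) (hq : q z ≠ q x₀) :
    z ∉ closure (convexHull ℝ S) := fun hz ↦ by
  have h := abs_apply_sub_le_of_mem_closure_convexHull hS hz
  rw [hp, sub_self, mul_zero] at h
  exact hq (sub_eq_zero.1 (abs_nonpos_iff.1 h))

end Cone

section Generators

variable {ι E : Type*} [AddCommGroup E] [Module ℝ E]

/-- The generators of the convex set `C`: the weighted vectors `a k • e k`, for `k ∈ s`, and their
reflections through `e o`. The paper's set has `a k = 1 / k`, `s = {k | 1 ≤ k}` and `o = 1`. -/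
def reflectedVectors (e : ι → E) (a : ι → ℝ) (s : Set ι) (o : ι) : Set E :=
  {z | ∃ k, k ∈ s ∧ z = a k • e k} ∪ {z | ∃ k, k ∈ s ∧ z = (2 : ℝ) • e o - a k • e k}

variable [TopologicalSpace E] [DecidableEq ι]

/-- Biorthogonality of the vectors `e k` and the functionals `φ k`, imposed only for indices in `s`
because the paper's sequences start at `1`. -/
def IsBiorthogonalOn (e : ι → E) (φ : ι → E →L[ℝ] ℝ) (s : Set ι) : Prop :=
  ∀ k j, k ∈ s → j ∈ s → φ k (e j) = if k = j then 1 else 0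

namespace IsBiorthogonalOn

variable {e : ι → E} {φ : ι → E →L[ℝ] ℝ} {s : Set ι} {a : ι → ℝ} {o n : ι} {y : E}

theorem apply_self (h : IsBiorthogonalOn e φ s) (hn : n ∈ s) : φ n (e n) = 1 := by
  rw [h n n hn hn, if_pos rfl]

theorem apply_of_ne (h : IsBiorthogonalOn e φ s) (ho : o ∈ s) (hn : n ∈ s) (hon : o ≠ n) :
    φ o (e n) = 0 := by
  rw [h o n ho hn, if_neg hon]

theorem abs_apply_smul_le (h : IsBiorthogonalOn e φ s) (ho : o ∈ s) (hn : n ∈ s) :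
    |φ o (a n • e n)| ≤ |a o| := by
  obtain rfl | hon := eq_or_ne o n
  · simp [h.apply_self ho]
  · simp [h.apply_of_ne ho hn hon]

theorem abs_apply_le_of_mem_reflectedVectors (h : IsBiorthogonalOn e φ s) (ho : o ∈ s)
    (hy : y ∈ reflectedVectors e a s o) : |φ o y| ≤ 2 + |a o| := by
  obtain ⟨k, hk, rfl⟩ | ⟨k, hk, rfl⟩ := hy
  · exact (h.abs_apply_smul_le ho hk).trans (le_add_of_nonneg_left zero_le_two)
  · calc |φ o ((2 : ℝ) • e o - a k • e k)| = |2 - φ o (a k • e k)| := by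
          rw [map_sub, map_smul, h.apply_self ho, smul_eq_mul, mul_one]
      _ ≤ |2| + |φ o (a k • e k)| := abs_sub _ _
      _ ≤ 2 + |a o| := add_le_add abs_two.le (h.abs_apply_smul_le ho hk)

theorem eq_smul_or_inv_mul_apply_nonpos (h : IsBiorthogonalOn e φ s) (ho : o ∈ s) (hn : n ∈ s)
    (hno : n ≠ o) (hy : y ∈ reflectedVectors e a s o) :
    y = a n • e n ∨ (a n)⁻¹ * φ n y ≤ 0 := by
  obtain ⟨k, hk, rfl⟩ | ⟨k, hk, rfl⟩ := hy <;> obtain rfl | hnk := eq_or_ne n k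
  · exact .inl rfl
  · simp [h.apply_of_ne hn hk hnk]
  · right
    calc (a n)⁻¹ * φ n ((2 : ℝ) • e o - a n • e n) = -((a n)⁻¹ * a n) := by
          simp [h.apply_self hn, h.apply_of_ne hn ho hno]
      _ ≤ 0 := neg_nonpos.2 (by by_cases ha : a n = 0 <;> simp [ha])
  · simp [h.apply_of_ne hn hk hnk, h.apply_of_ne hn ho hno]

theorem abs_apply_le_mul_one_sub (h : IsBiorthogonalOn e φ s) (ho : o ∈ s) (hn : n ∈ s)
    (hno : n ≠ o) (han : a n ≠ 0) (hy : y ∈ reflectedVectors e a s o) :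
    |φ o y| ≤ (2 + |a o|) * (1 - (a n)⁻¹ * φ n y) := by
  obtain rfl | hpy := h.eq_smul_or_inv_mul_apply_nonpos ho hn hno hy
  · simp [h.apply_self hn, h.apply_of_ne ho hn hno.symm, han]
  · calc |φ o y| ≤ 2 + |a o| := h.abs_apply_le_of_mem_reflectedVectors ho hy
      _ ≤ (2 + |a o|) * (1 - (a n)⁻¹ * φ n y) :=
        le_mul_of_one_le_right (by positivity) (by linarith)

theorem notMem_closure_convexHull_reflectedVectors (h : IsBiorthogonalOn e φ s) (ho : o ∈ s)
    (hn : n ∈ s) (hno : n ≠ o) (han : a n ≠ 0) {lam : ℝ} (hlam : lam ≠ 0) :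
    lam • e o + a n • e n ∉ closure (convexHull ℝ (reflectedVectors e a s o)) := by
  have hq : φ o (a n • e n) = 0 := by simp [h.apply_of_ne ho hn hno.symm]
  have hp : ((a n)⁻¹ • φ n) (a n • e n) = 1 := by simp [h.apply_self hn, han]
  refine notMem_closure_convexHull_of_apply_eq_of_apply_ne (x₀ := a n • e n)
    (p := (a n)⁻¹ • φ n) (q := φ o) (M := 2 + |a o|) (fun y hy ↦ ?_) ?_ ?_
  · rw [hq, hp, sub_zero]
    exact h.abs_apply_le_mul_one_sub ho hn hno han hy
  · rw [map_add, map_smul, smul_apply, h.apply_of_ne hn ho hno, smul_zero, smul_zero, zero_add]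
  · simpa [h.apply_self ho] using hlam

end IsBiorthogonalOn

end Generators

theorem dist_pos_of_shifted_point_general {ι Z : Type*} [DecidableEq ι] [SeminormedAddCommGroup Z]
    [NormedSpace ℝ Z] {e : ι → Z} {φ : ι → Z →L[ℝ] ℝ} {s : Set ι} {a : ι → ℝ} {o n : ι}
    (h : IsBiorthogonalOn e φ s) (ho : o ∈ s) (hn : n ∈ s) (hno : n ≠ o) (han : a n ≠ 0)
    {lam : ℝ} (hlam : lam ≠ 0) :
    0 < Metric.infDist (lam • e o + a n • e n)
        (closure (convexHull ℝ (reflectedVectors e a s o))) ∧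
      lam • e o + a n • e n ∉ closure (convexHull ℝ (reflectedVectors e a s o)) := by
  have hne : (closure (convexHull ℝ (reflectedVectors e a s o))).Nonempty :=
    ⟨a n • e n, subset_closure (subset_convexHull ℝ _ (.inl ⟨n, hn, rfl⟩))⟩
  have hz := h.notMem_closure_convexHull_reflectedVectors ho hn hno han hlam
  exact ⟨(isClosed_closure.notMem_iff_infDist_pos hne).1 hz, hz⟩

/-- Lemma 2.5: with `(eₙ)` a normalized sequence admitting biorthogonal continuous linear
functionals and `C` the closed convex hull of `{eₙ/n} ∪ {2e₁ - eₙ/n}`, every point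
`z = λe₁ + eₙ/n` with `λ > 0` and `n ≥ 2` is at positive distance from `C`;
in particular `z ∉ C`. -/
theorem dist_pos_of_shifted_point
    {Z : Type*} [NormedAddCommGroup Z] [NormedSpace ℝ Z] [CompleteSpace Z]
    (e : ℕ → Z) (he : ∀ n, 1 ≤ n → ‖e n‖ = 1)
    (φ : ℕ → Z →L[ℝ] ℝ)
    (hbi : ∀ k j, 1 ≤ k → 1 ≤ j → φ k (e j) = if k = j then 1 else 0)
    (C : Set Z)
    (hC : C = closure (convexHull ℝ
      ({z : Z | ∃ n : ℕ, 1 ≤ n ∧ z = (n : ℝ)⁻¹ • e n} ∪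
        {z : Z | ∃ n : ℕ, 1 ≤ n ∧ z = (2 : ℝ) • e 1 - (n : ℝ)⁻¹ • e n}))) :
    ∀ lam : ℝ, 0 < lam → ∀ n : ℕ, 2 ≤ n →
      0 < Metric.infDist (lam • e 1 + (n : ℝ)⁻¹ • e n) C ∧
      lam • e 1 + (n : ℝ)⁻¹ • e n ∉ C := by
  subst hC
  have h : IsBiorthogonalOn e φ (Set.Ici 1) := hbi
  exact fun lam hlam n hn ↦ dist_pos_of_shifted_point_general (a := fun k : ℕ ↦ (k : ℝ)⁻¹) h
    Set.self_mem_Ici (one_le_two.trans hn) (by lia) (inv_ne_zero (by norm_cast; lia)) hlam.ne'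
end

section
/- Let Z be a real Banach space and let (eₙ)ₙ≥₁ be a sequence in Z with ‖eₙ‖ = 1 for all n, admitting biorthogonal continuous linear functionals φₖ : Z → ℝ with φₖ(eⱼ) = 1 if k = j and 0 otherwise. Let P : Z → Z be a continuous linear projection with P(e₁) = 0 and P(eₙ) = eₙ for all n ≥ 2, and let C be the closed convex hull of {eₙ/n : n ≥ 1} ∪ {2e₁ − eₙ/n : n ≥ 1}. Then for every n ≥ 2: if z ∈ C and P(z) = eₙ/n then z = eₙ/n, and if z ∈ C and P(z) = −eₙ/n then z = 2e₁ − eₙ/n. -/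
/-!
The point `p = eₙ/n` is strongly exposed in `C` by the functional `f = φₙ ∘ P`: `f` equals `1/n`
at `p` and is at most `0` at every other generator of `C`. As the generators are bounded, this gap
gives `‖z - p‖ ≤ K * (f p - f z)` at each of them for some `K`, and this inequality passes to the
closed convex hull because it defines a closed convex set. The fiber over `-eₙ/n` is then obtained
from the symmetry `z ↦ 2e₁ - z` of `C`, under which `f` changes sign.
-/

open Set Bornology

section Reflection

variable {E : Type*} [AddCommGroup E] [Module ℝ E] [TopologicalSpace E] [IsTopologicalAddGroup E]

lemma sub_mem_closedConvexHull {s : Set E} {a z : E} (hs : ∀ y ∈ s, a - y ∈ s)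
    (hz : z ∈ closedConvexHull ℝ s) : a - z ∈ closedConvexHull ℝ s := by
  have hconv : Convex ℝ ((fun y => a - y) ⁻¹' closedConvexHull ℝ s) :=
    convex_closedConvexHull.affine_preimage (AffineMap.const ℝ E a - AffineMap.id ℝ E)
  have hclosed : IsClosed ((fun y => a - y) ⁻¹' closedConvexHull ℝ s) :=
    isClosed_closedConvexHull.preimage (continuous_const.sub continuous_id)
  have hsub : s ⊆ (fun y => a - y) ⁻¹' closedConvexHull ℝ s :=
    fun y hy => subset_closedConvexHull (hs y hy)
  exact closedConvexHull_min hsub hconv hclosed hz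

end Reflection

section StronglyExposed

lemma norm_sub_le_of_mem_closedConvexHull {E : Type*} [SeminormedAddCommGroup E] [NormedSpace ℝ E]
    {s : Set E} {p z : E} {f : E →L[ℝ] ℝ} {K c : ℝ} (hs : ∀ y ∈ s, ‖y - p‖ ≤ K * (c - f y))
    (hz : z ∈ closedConvexHull ℝ s) : ‖z - p‖ ≤ K * (c - f z) := by
  have hconv : Convex ℝ {y | ‖y - p‖ ≤ K * (c - f y)} := by
    have hnorm : ConvexOn ℝ univ fun y : E => ‖y - p‖ := by
      simpa only [dist_eq_norm] using convexOn_univ_dist p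
    have haffine : ConcaveOn ℝ univ fun y => K * (c - f y) :=
      ⟨convex_univ, fun x _ y _ t u _ _ htu => le_of_eq <| by
        simp only [map_add, map_smul, smul_eq_mul]
        linear_combination K * c * htu⟩
    simpa only [mem_univ, true_and, sub_nonpos, Pi.sub_apply] using (hnorm.sub haffine).convex_le 0
  have hclosed : IsClosed {y | ‖y - p‖ ≤ K * (c - f y)} :=
    isClosed_le (by fun_prop) (by fun_prop)
  exact closedConvexHull_min hs hconv hclosed hz

variable {E : Type*} [NormedAddCommGroup E] [NormedSpace ℝ E]
  {s : Set E} {a p z : E} {f : E →L[ℝ] ℝ}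

lemma eq_of_mem_closedConvexHull_of_gap_s10 {δ : ℝ} (hs : IsBounded s) (hδ : 0 < δ)
    (hgap : ∀ y ∈ s, y ≠ p → f y ≤ f p - δ) (hz : z ∈ closedConvexHull ℝ s) (hfz : f p ≤ f z) :
    z = p := by
  obtain ⟨R, hR, hsR⟩ := hs.subset_closedBall_lt 0 p
  have hbound : ∀ y ∈ s, ‖y - p‖ ≤ R / δ * (f p - f y) := by
    intro y hy
    obtain rfl | hyp := eq_or_ne y p
    · simp
    calc
      ‖y - p‖ ≤ R := mem_closedBall_iff_norm.mp (hsR hy)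
      _ = R / δ * δ := (div_mul_cancel₀ R hδ.ne').symm
      _ ≤ R / δ * (f p - f y) := by
        gcongr
        linarith [hgap y hy hyp]
  have hnorm : ‖z - p‖ ≤ 0 := (norm_sub_le_of_mem_closedConvexHull hbound hz).trans <|
    mul_nonpos_of_nonneg_of_nonpos (by positivity) (sub_nonpos.mpr hfz)
  exact sub_eq_zero.mp (norm_le_zero_iff.mp hnorm)

lemma eq_of_mem_closedConvexHull_union_reflection (hs : IsBounded s) (hfa : f a = 0)
    (hfp : 0 < f p) (hfs : ∀ y ∈ s, y ≠ p → f y = 0)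
    (hz : z ∈ closedConvexHull ℝ (s ∪ (a - ·) '' s)) (hfz : f z = f p) : z = p := by
  have hbounded : IsBounded (s ∪ (a - ·) '' s) := by
    rw [← singleton_sub]
    exact hs.union (isBounded_singleton.sub hs)
  refine eq_of_mem_closedConvexHull_of_gap_s10 hbounded hfp ?_ hz hfz.ge
  rintro _ (hy | ⟨y, hy, rfl⟩) hne
  · simp [hfs _ hy hne]
  · obtain rfl | hyp := eq_or_ne y p
    · simp [hfa, hfp.le]
    · simp [hfa, hfs y hy hyp]

lemma eq_sub_of_mem_closedConvexHull_union_reflection (hs : IsBounded s) (hfa : f a = 0)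
    (hfp : 0 < f p) (hfs : ∀ y ∈ s, y ≠ p → f y = 0)
    (hz : z ∈ closedConvexHull ℝ (s ∪ (a - ·) '' s)) (hfz : f z = -f p) : z = a - p := by
  have hsymm : ∀ y ∈ s ∪ (a - ·) '' s, a - y ∈ s ∪ (a - ·) '' s := by
    rintro _ (hy | ⟨y, hy, rfl⟩)
    · exact .inr (mem_image_of_mem _ hy)
    · exact .inl (by rwa [sub_sub_cancel])
  have hreflect : a - z = p :=
    eq_of_mem_closedConvexHull_union_reflection hs hfa hfp hfs (sub_mem_closedConvexHull hsymm hz)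
      (by rw [map_sub, hfa, hfz, zero_sub, neg_neg])
  rw [← hreflect, sub_sub_cancel]

end StronglyExposed

lemma isBounded_setOf_inv_smul {Z : Type*} [SeminormedAddCommGroup Z] [NormedSpace ℝ Z]
    {e : ℕ → Z} {M : ℝ} (he : ∀ n, 1 ≤ n → ‖e n‖ ≤ M * n) :
    IsBounded {z : Z | ∃ n : ℕ, 1 ≤ n ∧ z = (n : ℝ)⁻¹ • e n} := by
  refine isBounded_iff_forall_norm_le.mpr ⟨M, ?_⟩
  rintro _ ⟨n, hn, rfl⟩
  have hpos : (0 : ℝ) < n := by exact_mod_cast hn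
  rw [norm_smul, norm_inv, Real.norm_natCast, inv_mul_le_iff₀ hpos, mul_comm]
  exact he n hn

theorem fiber_single_valued_over_special_points_general
    {Z W : Type*} [NormedAddCommGroup Z] [NormedSpace ℝ Z]
    [AddCommGroup W] [Module ℝ W] [TopologicalSpace W]
    (e : ℕ → Z) {M : ℝ} (he : ∀ n, 1 ≤ n → ‖e n‖ ≤ M * n)
    (φ : ℕ → W →L[ℝ] ℝ) (P : Z →L[ℝ] W) (hP1 : P (e 1) = 0)
    (hbi : ∀ k j, 2 ≤ k → 2 ≤ j → φ k (P (e j)) = if k = j then 1 else 0)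
    (C : Set Z)
    (hC : C = closure (convexHull ℝ
      ({z : Z | ∃ n : ℕ, 1 ≤ n ∧ z = (n : ℝ)⁻¹ • e n} ∪
        {z : Z | ∃ n : ℕ, 1 ≤ n ∧ z = (2 : ℝ) • e 1 - (n : ℝ)⁻¹ • e n}))) :
    ∀ n : ℕ, 2 ≤ n →
      (∀ z ∈ C, P z = (n : ℝ)⁻¹ • P (e n) → z = (n : ℝ)⁻¹ • e n) ∧
      (∀ z ∈ C, P z = -((n : ℝ)⁻¹ • P (e n)) → z = (2 : ℝ) • e 1 - (n : ℝ)⁻¹ • e n) := by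
  intro n hn
  set s : Set Z := {z | ∃ m : ℕ, 1 ≤ m ∧ z = (m : ℝ)⁻¹ • e m}
  have hreflection : {z : Z | ∃ m : ℕ, 1 ≤ m ∧ z = (2 : ℝ) • e 1 - (m : ℝ)⁻¹ • e m} =
      ((2 : ℝ) • e 1 - ·) '' s := by
    ext z
    simp [s, eq_comm]
  rw [hreflection, ← closedConvexHull_eq_closure_convexHull] at hC
  subst hC
  have hs : IsBounded s := isBounded_setOf_inv_smul he
  let f : Z →L[ℝ] ℝ := (φ n).comp P
  have hfa : f ((2 : ℝ) • e 1) = 0 := by simp [f, hP1]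
  have hfp : 0 < f ((n : ℝ)⁻¹ • e n) := by
    have hpos : 0 < n := by lia
    simpa [f, hbi n n hn hn] using hpos
  have hfs : ∀ y ∈ s, y ≠ (n : ℝ)⁻¹ • e n → f y = 0 := by
    rintro _ ⟨m, hm, rfl⟩ hne
    have hnm : n ≠ m := fun h => hne (h ▸ rfl)
    obtain rfl | hm2 : m = 1 ∨ 2 ≤ m := by lia
    · simp [f, hP1]
    · simp [f, hbi n m hn hm2, hnm]
  exact ⟨fun z hz hPz => eq_of_mem_closedConvexHull_union_reflection hs hfa hfp hfs hz
      (by simp [f, hPz]),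
    fun z hz hPz => eq_sub_of_mem_closedConvexHull_union_reflection hs hfa hfp hfs hz
      (by simp [f, hPz])⟩

/-- Single-valuedness claim in the proof of Theorem 2.4: over the points `±eₙ/n` (`n ≥ 2`),
the multivalued inverse `(P|_C)⁻¹` is single-valued: the only point of `C` that `P` sends to
`eₙ/n` is `eₙ/n` itself, and the only point of `C` sent to `-eₙ/n` is `2e₁ - eₙ/n`. -/
theorem fiber_single_valued_over_special_points
    {Z : Type*} [NormedAddCommGroup Z] [NormedSpace ℝ Z] [CompleteSpace Z]
    (e : ℕ → Z) (he : ∀ n, 1 ≤ n → ‖e n‖ = 1)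
    (φ : ℕ → Z →L[ℝ] ℝ)
    (hbi : ∀ k j, 1 ≤ k → 1 ≤ j → φ k (e j) = if k = j then 1 else 0)
    (P : Z →L[ℝ] Z) (hPP : ∀ z, P (P z) = P z)
    (hP1 : P (e 1) = 0) (hPn : ∀ n, 2 ≤ n → P (e n) = e n)
    (C : Set Z)
    (hC : C = closure (convexHull ℝ
      ({z : Z | ∃ n : ℕ, 1 ≤ n ∧ z = (n : ℝ)⁻¹ • e n} ∪
        {z : Z | ∃ n : ℕ, 1 ≤ n ∧ z = (2 : ℝ) • e 1 - (n : ℝ)⁻¹ • e n}))) :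
    ∀ n : ℕ, 2 ≤ n →
      (∀ z ∈ C, P z = (n : ℝ)⁻¹ • e n → z = (n : ℝ)⁻¹ • e n) ∧
      (∀ z ∈ C, P z = -((n : ℝ)⁻¹ • e n) → z = (2 : ℝ) • e 1 - (n : ℝ)⁻¹ • e n) := by
  intro n hn
  simpa only [hPn n hn] using fiber_single_valued_over_special_points_general e (M := 1)
    (fun m hm => by simpa [he m hm] using hm) φ P hP1
    (fun k j hk hj => by rw [hPn j hj, hbi k j (by lia) (by lia)]) C hC n hn
end

section
/- Let K = {(cos t, sin t, t) : t ∈ [0, 2π]} ⊂ ℝ³, let C be the convex hull of K, let P : ℝ³ → ℝ² be the orthogonal projection P(x, y, z) = (x, y), let D = P(C), and define the linear surjection L : ℝ³ × ℝ → ℝ² by L(v, t) = P(v). Then L(C × [0, 1]) = D and the identity map of D is a continuous selection of the constant multivalued map x ↦ L(C × [0,1]), but there exist no continuous maps f₁ : D → C and f₂ : D → [0, 1] such that L(f₁(u), f₂(u)) = u for every u ∈ D. -/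
open Real

/-- The linear surjection `L : ℝ³ × ℝ → ℝ²`, `L (v, t) = P v`, which forgets the last factor. -/
noncomputable def exL : ((ℝ × ℝ × ℝ) × ℝ) →L[ℝ] ℝ × ℝ :=
  projP.comp (ContinuousLinearMap.fst ℝ (ℝ × ℝ × ℝ) ℝ)

/-!
The vertical plane tangent to the cylinder `x² + y² = 1` at `(cos t, sin t)` supports `C`, so it
cuts out of `C` the convex hull of its intersection with `K`. For `0 < t < 2π` this intersection is
the single point `(cos t, sin t, t)`. Hence a continuous section of `P : C → D` has height `t` above
`(cos t, sin t)` for all such `t`, and letting `t → 0` and `t → 2π` it would have both heights `0`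
and `2π` above `(1, 0)`.
-/

theorem subset_convexHull_inter_of_isExtreme {𝕜 E : Type*} [Field 𝕜] [LinearOrder 𝕜]
    [IsStrictOrderedRing 𝕜] [AddCommGroup E] [Module 𝕜 E] {s F : Set E}
    (hF : IsExtreme 𝕜 (convexHull 𝕜 s) F) : F ⊆ convexHull 𝕜 (s ∩ F) := by
  intro x hx
  have hull_diff : convexHull 𝕜 (s \ F) ⊆ convexHull 𝕜 s \ F :=
    convexHull_min (Set.sdiff_subset_sdiff_left (subset_convexHull 𝕜 s))
      (hF.convex_sdiff (convex_convexHull 𝕜 s))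
  have hx_hull : x ∈ convexHull 𝕜 (s ∩ F ∪ s \ F) := by
    rw [Set.inter_union_sdiff]
    exact hF.subset hx
  rcases (s ∩ F).eq_empty_or_nonempty with h_inter | h_inter
  · rw [h_inter, Set.empty_union] at hx_hull
    exact absurd hx (hull_diff hx_hull).2
  rcases (s \ F).eq_empty_or_nonempty with h_diff | h_diff
  · rwa [h_diff, Set.union_empty] at hx_hull
  rw [convexHull_union h_inter h_diff, mem_convexJoin] at hx_hull
  obtain ⟨y, hy, z, hz, hxyz⟩ := hx_hull
  obtain ⟨hz_hull, hzF⟩ := hull_diff hz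
  rw [← insert_endpoints_openSegment] at hxyz
  rcases hxyz with rfl | rfl | hxyz
  · exact hy
  · exact absurd hx hzF
  · have hy_hull : y ∈ convexHull 𝕜 s := convexHull_mono Set.inter_subset_left hy
    exact absurd (hF.right_mem_of_mem_openSegment hy_hull hz_hull hx hxyz) hzF

theorem isExposed_setOf_eq_of_forall_le {𝕜 E : Type*} [TopologicalSpace 𝕜] [Semiring 𝕜]
    [PartialOrder 𝕜] [AddCommMonoid E] [TopologicalSpace E] [Module 𝕜 E] {A : Set E}
    {l : StrongDual 𝕜 E} {c : 𝕜} (h : ∀ x ∈ A, l x ≤ c) : IsExposed 𝕜 A {x ∈ A | l x = c} := by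
  rintro ⟨w, hwA, rfl⟩
  refine ⟨l, Set.ext fun x => and_congr_right fun hx => ?_⟩
  exact ⟨fun hxw y hy => hxw ▸ h y hy, fun hmax => (h x hx).antisymm (hmax w hwA)⟩

/-- The linear functional `(x, y, z) ↦ x cos t + y sin t`. Its level set `1` is the vertical plane
touching the cylinder `x² + y² = 1` along the line above `(cos t, sin t)`. -/
noncomputable def tangentFunctional (t : ℝ) : StrongDual ℝ (ℝ × ℝ × ℝ) :=
  (cos t • ContinuousLinearMap.fst ℝ ℝ ℝ + sin t • ContinuousLinearMap.snd ℝ ℝ ℝ).comp projP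

theorem tangentFunctional_apply_spiral (s t : ℝ) :
    tangentFunctional t (cos s, sin s, s) = cos (s - t) := by
  simp [tangentFunctional, projP, cos_sub, mul_comm]

theorem tangentFunctional_eq_one_of_projP_eq {t : ℝ} {v : ℝ × ℝ × ℝ}
    (h : projP v = (cos t, sin t)) : tangentFunctional t v = 1 := by
  simp [tangentFunctional, h, ← sq]

theorem tangentFunctional_le_one (t : ℝ) {v : ℝ × ℝ × ℝ} (hv : v ∈ spiralC) :
    tangentFunctional t v ≤ 1 := by
  refine convexHull_min ?_ (convex_halfSpace_le (tangentFunctional t).isLinear 1) hv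
  rintro _ ⟨s, -, rfl⟩
  exact (tangentFunctional_apply_spiral s t).trans_le (cos_le_one _)

theorem eq_of_mem_spiralK_of_tangentFunctional_eq_one {t : ℝ} (ht : t ∈ Set.Ioo 0 (2 * π))
    {v : ℝ × ℝ × ℝ} (hv : v ∈ spiralK) (h : tangentFunctional t v = 1) :
    v = (cos t, sin t, t) := by
  obtain ⟨s, hs, rfl⟩ := hv
  rw [tangentFunctional_apply_spiral,
    cos_eq_one_iff_of_lt_of_lt (by linarith [hs.1, ht.2]) (by linarith [hs.2, ht.1]),
    sub_eq_zero] at h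
  rw [h]

theorem eq_of_mem_spiralC_of_projP_eq_s12 {t : ℝ} (ht : t ∈ Set.Ioo 0 (2 * π)) {v : ℝ × ℝ × ℝ}
    (hv : v ∈ spiralC) (h : projP v = (cos t, sin t)) : v = (cos t, sin t, t) := by
  let F : Set (ℝ × ℝ × ℝ) := {w ∈ spiralC | tangentFunctional t w = 1}
  have hF : IsExtreme ℝ spiralC F :=
    (isExposed_setOf_eq_of_forall_le fun _ => tangentFunctional_le_one t).isExtreme
  have hKF : spiralK ∩ F ⊆ {(cos t, sin t, t)} := fun _ hw =>
    eq_of_mem_spiralK_of_tangentFunctional_eq_one ht hw.1 hw.2.2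
  exact convexHull_min hKF (convex_singleton _) <|
    subset_convexHull_inter_of_isExtreme hF ⟨hv, tangentFunctional_eq_one_of_projP_eq h⟩

theorem cos_sin_mem_projP_image_spiralC (t : ℝ) : (cos t, sin t) ∈ projP '' spiralC := by
  have periodic : Function.Periodic (fun t => (cos t, sin t)) (2 * π) := fun t => by simp
  obtain ⟨s, hs, hst⟩ := periodic.exists_mem_Ico₀ two_pi_pos t
  exact ⟨(cos s, sin s, s), subset_convexHull ℝ _ ⟨s, Set.Ico_subset_Icc_self hs, rfl⟩, hst.symm⟩

theorem not_continuous_of_projP_rightInverse {f : projP '' spiralC → spiralC}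
    (hf : ∀ u, projP (f u) = u) : ¬ Continuous f := by
  intro f_cont
  let γ : ℝ → projP '' spiralC := fun t => ⟨(cos t, sin t), cos_sin_mem_projP_image_spiralC t⟩
  let height : ℝ → ℝ := fun t => (f (γ t) : ℝ × ℝ × ℝ).2.2
  have γ_cont : Continuous γ := by fun_prop
  have height_cont : Continuous height := by fun_prop
  have height_eq_Ioo : Set.EqOn height id (Set.Ioo 0 (2 * π)) := fun t ht =>
    congrArg (fun v => v.2.2) (eq_of_mem_spiralC_of_projP_eq_s12 ht (f (γ t)).2 (hf (γ t)))
  have height_eq_Icc : Set.EqOn height id (Set.Icc 0 (2 * π)) := by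
    rw [← closure_Ioo two_pi_pos.ne]
    exact height_eq_Ioo.closure height_cont continuous_id
  have γ_closed : γ 0 = γ (2 * π) := by simp [γ]
  have zero_eq_two_pi : 0 = 2 * π := calc
    0 = height 0 := (height_eq_Icc (Set.left_mem_Icc.2 two_pi_pos.le)).symm
    _ = height (2 * π) := by simp only [height, γ_closed]
    _ = 2 * π := height_eq_Icc (Set.right_mem_Icc.2 two_pi_pos.le)
  exact two_pi_pos.ne zero_eq_two_pi

theorem exL_image_prod (s : Set (ℝ × ℝ × ℝ)) {r : Set ℝ} (hr : r.Nonempty) :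
    exL '' (s ×ˢ r) = projP '' s := calc
  exL '' (s ×ˢ r) = projP '' (Prod.fst '' (s ×ˢ r)) := Set.image_comp projP Prod.fst _
  _ = projP '' s := by rw [Set.fst_image_prod s hr]

/-- Example 3.2: with `C = conv K` the convex hull of the spiral, `D = P(C)` and
`L(v, t) = P(v)`, we have `L(C × [0,1]) = D`, so the identity of `D` is a continuous selection
of the constant multivalued map with value `L(C × [0,1])`; but there are no continuous maps
`f₁ : D → C`, `f₂ : D → [0,1]` with `L(f₁ u, f₂ u) = u` for all `u ∈ D`. -/
theorem example_no_splitting :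
    ⇑exL '' (spiralC ×ˢ Set.Icc (0 : ℝ) 1) = ⇑projP '' spiralC ∧
    Continuous (fun u : ↥(⇑projP '' spiralC) => (u : ℝ × ℝ)) ∧
    ¬ ∃ (f₁ : ↥(⇑projP '' spiralC) → ↥spiralC)
        (f₂ : ↥(⇑projP '' spiralC) → ↥(Set.Icc (0 : ℝ) 1)),
        Continuous f₁ ∧ Continuous f₂ ∧
        ∀ u : ↥(⇑projP '' spiralC),
          exL ((f₁ u : ℝ × ℝ × ℝ), (f₂ u : ℝ)) = (u : ℝ × ℝ) := by
  refine ⟨exL_image_prod spiralC (Set.nonempty_Icc.2 zero_le_one), continuous_subtype_val, ?_⟩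
  rintro ⟨f₁, f₂, f₁_cont, -, split⟩
  exact not_continuous_of_projP_rightInverse split f₁_cont
end

section
/- Let Z be a real Banach space with dim Z ≤ 2. Then for every real Banach space Y, every continuous linear surjection L : Z → Y, and every compact convex subset C ⊆ Z, there exists a continuous map s : L(C) → C such that L(s(y)) = y for every y ∈ L(C). -/
/-!
If `L` is injective on the compact set `C`, it is a homeomorphism onto `L(C)`. Otherwise, when
`dim Z ≤ 2`, the range of `L` is at most a line. In that case `L : C → L(C)` is an open map:
moving from a point of `C` along segments inside `C` reaches all nearby values of `L`. Openness
makes the set of points minimizing a given continuous function over their fibre closed, hence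
compact; for a strictly convex function each fibre contains exactly one such point, so `L` maps
this set homeomorphically onto `L(C)`, and the inverse is the section.
-/

open Set Filter Topology Function

section FibreMinimizers

/-- The points of `X` at which `φ` attains its minimum over the fibre of `p` through the point.
When each fibre contains exactly one such point, they form the image of a section of `p`. -/
def fibreMinimizers {X Y α : Type*} [Preorder α] (p : X → Y) (φ : X → α) : Set X :=
  {x | IsMinOn φ (p ⁻¹' {p x}) x}

variable {X Y α : Type*} [TopologicalSpace X] [TopologicalSpace Y]
  [LinearOrder α] [TopologicalSpace α] [OrderClosedTopology α]
  {p : X → Y} {φ : X → α}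

theorem isClosed_fibreMinimizers [DenselyOrdered α] (hp : Continuous p) (hpo : IsOpenMap p)
    (hφ : Continuous φ) : IsClosed (fibreMinimizers p φ) := by
  have hcompl : (fibreMinimizers p φ)ᶜ = ⋃ c, p ⁻¹' (p '' (φ ⁻¹' Iio c)) ∩ φ ⁻¹' Ioi c := by
    ext x
    simp only [fibreMinimizers, isMinOn_iff, mem_compl_iff, mem_ofPred_eq, mem_preimage,
      mem_singleton_iff, not_forall, not_le, mem_iUnion, mem_inter_iff, mem_image, mem_Iio, mem_Ioi]
    constructor
    · rintro ⟨z, hz, hlt⟩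
      obtain ⟨c, hzc, hcx⟩ := exists_between hlt
      exact ⟨c, ⟨z, hzc, hz⟩, hcx⟩
    · rintro ⟨c, ⟨z, hzc, hz⟩, hcx⟩
      exact ⟨z, hz, hzc.trans hcx⟩
  rw [← isOpen_compl_iff, hcompl]
  exact isOpen_iUnion fun c ↦
    ((hpo _ (isOpen_Iio.preimage hφ)).preimage hp).inter (isOpen_Ioi.preimage hφ)

theorem exists_mem_fibreMinimizers [CompactSpace X] [T1Space Y] (hp : Continuous p)
    (hφ : Continuous φ) (x : X) : ∃ z ∈ fibreMinimizers p φ, p z = p x := by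
  obtain ⟨z, hz, hmin⟩ := (isClosed_singleton.preimage hp).isCompact.exists_isMinOn
    ⟨x, rfl⟩ hφ.continuousOn
  have hzx : p z = p x := hz
  exact ⟨z, by rwa [fibreMinimizers, mem_ofPred_eq, hzx], hzx⟩

theorem exists_continuous_rightInverse_of_isCompact_of_bijOn [T2Space Y] {K : Set X}
    (hK : IsCompact K) (hp : ContinuousOn p K) (hbij : BijOn p K univ) :
    ∃ s : Y → X, Continuous s ∧ RightInverse s p := by
  have : CompactSpace K := isCompact_iff_compactSpace.mp hK
  have hbij' : Bijective (K.domRestrict p) :=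
    ⟨injOn_iff_injective.mp hbij.injOn, surjOn_iff_surjective.mp hbij.surjOn⟩
  let e : K ≃ₜ Y :=
    (isHomeomorph_iff_continuous_bijective.mpr ⟨hp.domRestrict, hbij'⟩).homeomorph
  exact ⟨fun y ↦ e.symm y, continuous_subtype_val.comp e.symm.continuous, e.apply_symm_apply⟩

theorem exists_continuous_rightInverse_of_injOn_fibreMinimizers [DenselyOrdered α]
    [CompactSpace X] [T2Space Y] (hp : Continuous p) (hpo : IsOpenMap p) (hps : Surjective p)
    (hφ : Continuous φ) (hinj : InjOn p (fibreMinimizers p φ)) :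
    ∃ s : Y → X, Continuous s ∧ RightInverse s p := by
  refine exists_continuous_rightInverse_of_isCompact_of_bijOn
    (isClosed_fibreMinimizers hp hpo hφ).isCompact hp.continuousOn
    ⟨mapsTo_univ _ _, hinj, fun y _ ↦ ?_⟩
  obtain ⟨x, rfl⟩ := hps y
  exact exists_mem_fibreMinimizers hp hφ x

end FibreMinimizers

theorem injOn_imageFactorization_fibreMinimizers {Z Y : Type*} [AddCommGroup Z] [Module ℝ Z]
    [AddCommGroup Y] [Module ℝ Y] {C : Set Z} {φ : Z → ℝ} (hφ : StrictConvexOn ℝ C φ)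
    (L : Z →ₗ[ℝ] Y) :
    InjOn (C.imageFactorization L)
      (fibreMinimizers (C.imageFactorization L) (C.domRestrict φ)) := by
  intro a ha b hb hab
  have hfibre : StrictConvexOn ℝ (C ∩ L ⁻¹' {L a}) φ :=
    hφ.subset inter_subset_left (hφ.1.inter ((convex_singleton (L a)).linear_preimage L))
  have hLab : L a = L b := congrArg Subtype.val hab
  have hmin : ∀ c ∈ fibreMinimizers (C.imageFactorization L) (C.domRestrict φ), L a = L c →
      IsMinOn φ (C ∩ L ⁻¹' {L a}) c := fun c hc hac ↦
    isMinOn_iff.mpr fun z hz ↦ isMinOn_iff.mp hc ⟨z, hz.1⟩ (Subtype.ext (hz.2.trans hac))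
  exact Subtype.ext (hfibre.eq_of_isMinOn (hmin a ha rfl) (hmin b hb hLab)
    ⟨a.2, rfl⟩ ⟨b.2, hLab.symm⟩)

section NhdsWithin

variable {α : Type*} [LinearOrder α] [TopologicalSpace α] [OrderClosedTopology α]
  {S : Set α} {a : α}

theorem exists_nhdsWithin_inter_Ici_le_uIcc (ha : a ∈ S) :
    ∃ b ∈ S, 𝓝[S ∩ Ici a] a ≤ 𝓝[uIcc a b] a := by
  by_cases! h : ∃ b ∈ S, a < b
  · obtain ⟨b, hbS, hab⟩ := h
    refine ⟨b, hbS, ?_⟩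
    rw [uIcc_of_le hab.le, nhdsWithin_Icc_eq_nhdsGE hab]
    exact nhdsWithin_mono a inter_subset_right
  · exact ⟨a, ha, nhdsWithin_mono a fun t ht ↦ by simpa using (h t ht.1).antisymm ht.2⟩

theorem exists_nhdsWithin_inter_Iic_le_uIcc (ha : a ∈ S) :
    ∃ b ∈ S, 𝓝[S ∩ Iic a] a ≤ 𝓝[uIcc a b] a := by
  obtain ⟨b, hb, hab⟩ := exists_nhdsWithin_inter_Ici_le_uIcc
    (S := OrderDual.ofDual ⁻¹' S) (a := OrderDual.toDual a) ha
  refine ⟨OrderDual.ofDual b, hb, ?_⟩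
  rwa [← OrderDual.toDual_ofDual b, uIcc_toDual] at hab

theorem nhdsWithin_le_of_forall_uIcc (ha : a ∈ S) {F : Filter α}
    (hF : ∀ b ∈ S, 𝓝[uIcc a b] a ≤ F) : 𝓝[S] a ≤ F := by
  obtain ⟨b, hb, hab⟩ := exists_nhdsWithin_inter_Ici_le_uIcc ha
  obtain ⟨c, hc, hac⟩ := exists_nhdsWithin_inter_Iic_le_uIcc ha
  rw [← inter_univ S, ← Ici_union_Iic (a := a), inter_union_distrib_left, nhdsWithin_union]
  exact sup_le (hab.trans (hF b hb)) (hac.trans (hF c hc))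

end NhdsWithin

section OpenOnConvex

variable {Z : Type*} [AddCommGroup Z] [Module ℝ Z] [TopologicalSpace Z] [ContinuousAdd Z]
  [ContinuousSMul ℝ Z] {C : Set Z}

theorem nhdsWithin_uIcc_le_map_nhdsWithin (f : Z →ₗ[ℝ] ℝ) (hC : Convex ℝ C) {x z : Z}
    (hx : x ∈ C) (hz : z ∈ C) : 𝓝[uIcc (f x) (f z)] (f x) ≤ map f (𝓝[C] x) := by
  -- If `f z = f x`, division by zero makes `g` constant with value `x`, as it should be.
  let g : ℝ → Z := fun t ↦ AffineMap.lineMap x z ((t - f x) / (f z - f x))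
  have hgx : g (f x) = x := by simp [g]
  have hgcont : Continuous g := by
    simp only [g, AffineMap.lineMap_apply_module]
    fun_prop
  have hg : ∀ t ∈ uIcc (f x) (f z), g t ∈ C ∧ f (g t) = t := fun t ht ↦ by
    rw [← segment_eq_uIcc, segment_eq_image_lineMap] at ht
    obtain ⟨θ, hθ, rfl⟩ := ht
    by_cases hxz : f x = f z
    · simp [← hxz, hgx, hx]
    have hgθ : g (AffineMap.lineMap (f x) (f z) θ) = AffineMap.lineMap x z θ := by
      simp [g, AffineMap.lineMap_apply, sub_ne_zero.mpr (Ne.symm hxz)]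
    rw [hgθ]
    exact ⟨hC.lineMap_mem hx hz hθ, by simp [AffineMap.lineMap_apply]⟩
  refine le_map_of_right_inverse (mba := g)
    (eventually_nhdsWithin_of_forall fun t ht ↦ (hg t ht).2) ?_
  simpa only [hgx] using
    (hgcont.continuousWithinAt (x := f x)).tendsto_nhdsWithin fun t ht ↦ (hg t ht).1

theorem isOpenMap_imageFactorization_of_convex (f : Z →ₗ[ℝ] ℝ) (hC : Convex ℝ C) :
    IsOpenMap (C.imageFactorization f) := by
  refine isOpenMap_iff_nhds_le.mpr fun x ↦ ?_
  rw [← map_le_map_iff Subtype.val_injective, map_map, map_nhds_subtype_val,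
    imageFactorization_eq, ← map_map, map_nhds_subtype_val]
  refine nhdsWithin_le_of_forall_uIcc (mem_image_of_mem f x.2) ?_
  rintro _ ⟨z, hz, rfl⟩
  exact nhdsWithin_uIcc_le_map_nhdsWithin f hC x.2 hz

variable {Y : Type*} [AddCommGroup Y] [Module ℝ Y] [TopologicalSpace Y] [IsTopologicalAddGroup Y]
  [ContinuousSMul ℝ Y] [T2Space Y]

theorem isOpenMap_imageFactorization_of_rank_le_one {L : Z →ₗ[ℝ] Y} (hL : L.rank ≤ 1)
    (hC : Convex ℝ C) : IsOpenMap (C.imageFactorization L) := by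
  obtain ⟨ι, hι⟩ : ∃ ι : L.range →ₗ[ℝ] ℝ, Injective ι :=
    lift_rank_le_iff_exists_linearMap.mp (by simpa using hL)
  have : FiniteDimensional ℝ L.range := FiniteDimensional.of_injective ι hι
  have hιcont : Continuous ι := ι.continuous_of_finiteDimensional
  let j : L '' C → (ι ∘ₗ L.rangeRestrict) '' C := fun y ↦
    ⟨ι ⟨y, image_subset_range _ _ y.2⟩, by
      obtain ⟨_, z, hz, rfl⟩ := y
      exact ⟨z, hz, rfl⟩⟩
  have hj : Continuous j := by fun_prop
  have hjinj : Injective j := fun y y' h ↦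
    Subtype.ext (Subtype.mk.inj (hι (Subtype.ext_iff.mp h)))
  intro U hU
  rw [← hjinj.preimage_image (C.imageFactorization L '' U), ← image_comp]
  exact (isOpenMap_imageFactorization_of_convex (ι ∘ₗ L.rangeRestrict) hC U hU).preimage hj

theorem exists_continuous_rightInverse_imageFactorization_of_strictConvexOn (hCcp : IsCompact C)
    {φ : Z → ℝ} (hφ : StrictConvexOn ℝ C φ) (hφc : ContinuousOn φ C)
    {L : Z →L[ℝ] Y} (hL : L.toLinearMap.rank ≤ 1) :
    ∃ s : L '' C → C, Continuous s ∧ RightInverse s (C.imageFactorization L) := by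
  have : CompactSpace C := isCompact_iff_compactSpace.mp hCcp
  exact exists_continuous_rightInverse_of_injOn_fibreMinimizers
    ((L.continuous.comp continuous_subtype_val).subtype_mk _)
    (isOpenMap_imageFactorization_of_rank_le_one hL hφ.1) imageFactorization_surjective
    hφc.domRestrict (injOn_imageFactorization_fibreMinimizers hφ L.toLinearMap)

end OpenOnConvex

theorem strictConvexOn_norm_sq (E : Type*) [NormedAddCommGroup E] [InnerProductSpace ℝ E] :
    StrictConvexOn ℝ univ fun x : E ↦ ‖x‖ ^ 2 :=
  ((strongConvexOn_iff_convex (m := 2)).mpr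
    (by simpa using convexOn_const 0 convex_univ)).strictConvexOn two_pos

theorem exists_continuous_strictConvexOn_univ (Z : Type*) [AddCommGroup Z] [Module ℝ Z]
    [TopologicalSpace Z] [IsTopologicalAddGroup Z] [ContinuousSMul ℝ Z] [T2Space Z]
    [FiniteDimensional ℝ Z] : ∃ φ : Z → ℝ, Continuous φ ∧ StrictConvexOn ℝ univ φ := by
  refine ⟨fun z ↦ ‖toEuclidean z‖ ^ 2, by fun_prop, convex_univ, ?_⟩
  intro x _ y _ hxy a b ha hb hab
  simpa using (strictConvexOn_norm_sq _).2 (mem_univ (toEuclidean x)) (mem_univ (toEuclidean y))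
    (toEuclidean.injective.ne hxy) ha hb hab

theorem rank_le_or_injective_of_rank_le_add_one {K V W : Type*} [DivisionRing K] [AddCommGroup V]
    [Module K V] [AddCommGroup W] [Module K W] {n : ℕ} (hV : Module.rank K V ≤ n + 1)
    (f : V →ₗ[K] W) : f.rank ≤ n ∨ Injective f := by
  have : FiniteDimensional K V :=
    Module.rank_lt_aleph0_iff.mp (hV.trans_lt (by exact_mod_cast Cardinal.natCast_lt_aleph0))
  have hfinrank : Module.finrank K V ≤ n + 1 := Module.finrank_le_of_rank_le (by exact_mod_cast hV)
  have hsum := f.finrank_range_add_finrank_ker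
  refine or_iff_not_imp_left.mpr fun hrank ↦
    LinearMap.ker_eq_bot.mp (Submodule.finrank_eq_zero.mp ?_)
  rw [LinearMap.rank, ← Module.finrank_eq_rank, Nat.cast_le] at hrank
  lia

theorem compact_convex_hereditary_invertible_of_rank_le_two_general
    {Z : Type*} [AddCommGroup Z] [Module ℝ Z] [TopologicalSpace Z] [IsTopologicalAddGroup Z]
    [ContinuousSMul ℝ Z] [T2Space Z] [FiniteDimensional ℝ Z]
    {Y : Type*} [AddCommGroup Y] [Module ℝ Y] [TopologicalSpace Y] [IsTopologicalAddGroup Y]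
    [ContinuousSMul ℝ Y] [T2Space Y]
    (L : Z →L[ℝ] Y) (hL : L.toLinearMap.rank ≤ 1 ∨ Injective L)
    (C : Set Z) (hCcp : IsCompact C) (hC : Convex ℝ C) :
    ∃ s : L '' C → C, Continuous s ∧ ∀ y : L '' C, L (s y) = y := by
  suffices ∃ s : L '' C → C, Continuous s ∧ RightInverse s (C.imageFactorization L) from
    this.imp fun s hs ↦ ⟨hs.1, fun y ↦ congrArg Subtype.val (hs.2 y)⟩
  rcases hL with hrank | hinj
  · obtain ⟨φ, hφc, hφ⟩ := exists_continuous_strictConvexOn_univ Z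
    exact exists_continuous_rightInverse_imageFactorization_of_strictConvexOn hCcp
      (hφ.subset (subset_univ C) hC) hφc.continuousOn hrank
  · have : CompactSpace C := isCompact_iff_compactSpace.mp hCcp
    exact exists_continuous_rightInverse_of_isCompact_of_bijOn isCompact_univ
      ((L.continuous.comp continuous_subtype_val).subtype_mk _).continuousOn
      (bijOn_univ.mpr ⟨hinj.injOn.imageFactorization_injective, imageFactorization_surjective⟩)

/-- The other direction of Remark (1) after Theorem 2.1: every continuous linear surjection
from a Banach space `Z` of dimension at most 2 is hereditarily invertible with respect to the
family of all convex compacta of `Z`. -/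
theorem compact_convex_hereditary_invertible_of_rank_le_two
    {Z : Type*} [NormedAddCommGroup Z] [NormedSpace ℝ Z] [CompleteSpace Z]
    (hZ : Module.rank ℝ Z ≤ 2)
    {Y : Type*} [NormedAddCommGroup Y] [NormedSpace ℝ Y] [CompleteSpace Y]
    (L : Z →L[ℝ] Y) (hL : Function.Surjective L)
    (C : Set Z) (hCcp : IsCompact C) (hC : Convex ℝ C) :
    ∃ s : ↥(⇑L '' C) → ↥C, Continuous s ∧ ∀ y : ↥(⇑L '' C), L (s y : Z) = (y : Y) := by
  have : FiniteDimensional ℝ Z :=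
    Module.rank_lt_aleph0_iff.mp (hZ.trans_lt Cardinal.ofNat_lt_aleph0)
  have hL' : L.toLinearMap.rank ≤ 1 ∨ Function.Injective L := by
    exact_mod_cast rank_le_or_injective_of_rank_le_add_one (n := 1)
      (by simpa [one_add_one_eq_two] using hZ) L.toLinearMap
  exact compact_convex_hereditary_invertible_of_rank_le_two_general L hL' C hCcp hC
end
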